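/- arXiv:1406.6683 — 2 statements merged into one kernel-verified Lean document; each statement's English description precedes it below -/
import Mathlib

section
/- For every pLTL_◇ formula φ in which each parameter variable occurs at most once and every finite Markov chain M with m states: V_{>0}(φ) ≠ ∅ if and only if v̄ ∈ V_{>0}(φ), where v̄ is the valuation assigning v̄(x) = m·|φ|·2^{|φ|} to every parameter variable x of φ. -/
open MeasureTheory
open scoped ENNReal

/-- Syntax of the fragment pLTL_◇ :
φ ::= a | ¬a | φ∧φ | φ∨φ | ○φ | φUφ | φRφ | □φ | ◇_{≤x}φ. -/
inductive PD (AP Var : Type) : Type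
  | atom : AP → PD AP Var
  | natom : AP → PD AP Var
  | and : PD AP Var → PD AP Var → PD AP Var
  | or : PD AP Var → PD AP Var → PD AP Var
  | next : PD AP Var → PD AP Var
  | untl : PD AP Var → PD AP Var → PD AP Var
  | release : PD AP Var → PD AP Var → PD AP Var
  | always : PD AP Var → PD AP Var
  | evVar : Var → PD AP Var → PD AP Var

/-- The size `|φ|` of a formula: the number of subformula occurrences. -/
def PD.size {AP Var : Type} : PD AP Var → ℕ
  | atom _ => 1
  | natom _ => 1
  | and φ ψ => PD.size φ + PD.size ψ + 1
  | or φ ψ => PD.size φ + PD.size ψ + 1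
  | next φ => PD.size φ + 1
  | untl φ ψ => PD.size φ + PD.size ψ + 1
  | release φ ψ => PD.size φ + PD.size ψ + 1
  | always φ => PD.size φ + 1
  | evVar _ φ => PD.size φ + 1

/-- The number of occurrences of the parameter variable `x` in a formula. -/
def PD.varCount {AP Var : Type} [DecidableEq Var] (x : Var) : PD AP Var → ℕ
  | atom _ => 0
  | natom _ => 0
  | and φ ψ => PD.varCount x φ + PD.varCount x ψ
  | or φ ψ => PD.varCount x φ + PD.varCount x ψ
  | next φ => PD.varCount x φ
  | untl φ ψ => PD.varCount x φ + PD.varCount x ψ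
  | release φ ψ => PD.varCount x φ + PD.varCount x ψ
  | always φ => PD.varCount x φ
  | evVar y φ => (if y = x then 1 else 0) + PD.varCount x φ

/-- Satisfaction relation `(w,i,v) ⊨ φ` for pLTL_◇. -/
def PD.Sat {AP Var : Type} (w : ℕ → Set AP) : ℕ → (Var → ℕ) → PD AP Var → Prop
  | i, _, atom a => a ∈ w i
  | i, _, natom a => a ∉ w i
  | i, v, and φ ψ => PD.Sat w i v φ ∧ PD.Sat w i v ψ
  | i, v, or φ ψ => PD.Sat w i v φ ∨ PD.Sat w i v ψ
  | i, v, next φ => PD.Sat w (i + 1) v φ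
  | i, v, untl φ ψ =>
      ∃ j, i ≤ j ∧ PD.Sat w j v ψ ∧ ∀ k, i ≤ k → k < j → PD.Sat w k v φ
  | i, v, release φ ψ =>
      ∀ j, i ≤ j → (PD.Sat w j v ψ ∨ ∃ k, i ≤ k ∧ k < j ∧ PD.Sat w k v φ)
  | i, v, always φ => ∀ j, i ≤ j → PD.Sat w j v φ
  | i, v, evVar x φ => ∃ j, i ≤ j ∧ j ≤ v x + i ∧ PD.Sat w j v φ

/-!
A generic path traverses infinitely often every finite path whose start stays reachable, and almost
every path of a finite Markov chain is generic. On generic paths `□C` for a closed set `C` is witnessed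
by a finite prefix: `C` holds until a vertex from which no generic path leaves it (a *stable*
vertex of `C`). Hence each formula, and each negation, is equivalent on generic paths to a
co-safety formula in which such vertices discharge the release obligations, so truth sets are
clopen, and it suffices to find, for a generic path satisfying `v(φ)`, one satisfying `w(φ)` with
the same first vertex.

A prefix witnessing the co-safety formula of `φ` can be shortened, by the pigeonhole principle on
the sets of temporal subformulas true at its positions, below the bound `m·2^|φ|`, where the
bounded eventualities hold by themselves. This requires that a vertex stable for a subformula under
`v` is also stable under `w`. Otherwise some reachable path refutes the subformula for `w`; its
witness, in which `◇_{≤x}` has become a bounded `□` with a window longer than twice the number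
of profiles, is cut into blocks, and repeating a factor of each block stretches all windows beyond
`v`, contradicting stability under `v`. Stability also has to be transferred in the other direction
for the refutation, so both transfers are proved together by induction on the size.
-/

namespace PLTL

open Filter Topology Relation

section Paths

variable {S : Type*} {R : S → S → Prop}

/-- A path of the graph `R` is *generic* if it traverses infinitely often every finite path whose
first vertex remains reachable forever. Almost every path of a finite Markov chain is generic; the
finite path is encoded as an initial segment `u 0, …, u l` of an infinite one. -/
structure IsGeneric (R : S → S → Prop) (π : ℕ → S) : Prop where
  step : ∀ i, R (π i) (π (i + 1))
  frequently : ∀ u : ℕ → S, (∀ k, R (u k) (u (k + 1))) → (∀ n, ReflTransGen R (π n) (u 0)) →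
    ∀ l, ∃ᶠ i in atTop, ∀ k ≤ l, π (k + i) = u k

/-- The space of generic paths of a graph, topologised as a subspace of `ℕ → S`. -/
abbrev GenericPath (R : S → S → Prop) := {π : ℕ → S // IsGeneric R π}

/-- The sequence `π` preceded by `s`. -/
def prepend (s : S) (π : ℕ → S) : ℕ → S
  | 0 => s
  | k + 1 => π k

theorem IsGeneric.reach {π : ℕ → S} (hπ : IsGeneric R π) {i j : ℕ} (hij : i ≤ j) :
    ReflTransGen R (π i) (π j) :=
  Nat.le_induction .refl (fun k _ h => h.tail (hπ.step k)) j hij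

theorem IsGeneric.shift {π : ℕ → S} (hπ : IsGeneric R π) (n : ℕ) :
    IsGeneric R fun k => π (k + n) where
  step i := by simpa only [add_right_comm] using hπ.step (i + n)
  frequently u hu hreach l := by
    have hreach' : ∀ m, ReflTransGen R (π m) (u 0) := fun m =>
      (hπ.reach (Nat.le_add_right m n)).trans (hreach m)
    refine (tendsto_sub_atTop_nat n).frequently
      (((hπ.frequently u hu hreach' l).and_eventually (eventually_ge_atTop n)).mono ?_)
    rintro i ⟨hi, hn⟩ k hk
    rw [add_assoc, Nat.sub_add_cancel hn, hi k hk]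

theorem IsGeneric.prepend {π : ℕ → S} (hπ : IsGeneric R π) {s : S} (hs : R s (π 0)) :
    IsGeneric R (prepend s π) where
  step
    | 0 => hs
    | i + 1 => hπ.step i
  frequently u hu hreach l := by
    refine (tendsto_add_atTop_nat 1).frequently
      ((hπ.frequently u hu (fun n => hreach (n + 1)) l).mono fun i hi k hk => ?_)
    exact hi k hk

namespace GenericPath

/-- The path `π` with its first `n` steps removed. -/
def shift (n : ℕ) (π : GenericPath R) : GenericPath R := ⟨_, π.2.shift n⟩

@[simp]
theorem shift_val (n k : ℕ) (π : GenericPath R) : (shift n π).1 k = π.1 (k + n) := rfl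

/-- The path `π` preceded by the vertex `s`. -/
def cons (s : S) (π : GenericPath R) (h : R s (π.1 0)) : GenericPath R := ⟨_, π.2.prepend h⟩

/-- The first `n` vertices of `π`. -/
def take (n : ℕ) (π : GenericPath R) : List S := (List.range n).map π.1

@[simp]
theorem length_take (n : ℕ) (π : GenericPath R) : (take n π).length = n := by simp [take]

theorem take_succ (n : ℕ) (π : GenericPath R) : take (n + 1) π = π.1 0 :: take n (shift 1 π) := by
  simp only [take, List.range_succ_eq_map, List.map_cons, List.map_map]; rfl

theorem drop_take (k n : ℕ) (π : GenericPath R) :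
    (take n π).drop k = take (n - k) (shift k π) := by
  refine List.ext_getElem (by simp) fun i _ _ => ?_
  simp [take, add_comm]

end GenericPath

open GenericPath

/-- The vertices from which every reachable generic path lies in `C`. -/
def stable (C : Set (GenericPath R)) : Set S :=
  {s | ∀ ω : GenericPath R, ReflTransGen R s (ω.1 0) → ω ∈ C}

/-- The generic paths with a suffix in `C` all of whose proper predecessors lie in `A`. -/
def untilSet (A C : Set (GenericPath R)) : Set (GenericPath R) :=
  {π | ∃ j, shift j π ∈ C ∧ ∀ k < j, shift k π ∈ A}

/-- The generic paths on which `A` releases `C`: either `C` holds up to and including a position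
where `A` holds, or it holds up to a vertex from which it cannot fail any more. On generic paths
this is the usual release operator (`compl_untilSet`), although a finite prefix witnesses it. -/
def releaseSet (A C : Set (GenericPath R)) : Set (GenericPath R) :=
  untilSet C ({π | π.1 0 ∈ stable C} ∪ (A ∩ C))

theorem untilSet_mono {A A' C C' : Set (GenericPath R)} (hA : A ⊆ A') (hC : C ⊆ C') :
    untilSet A C ⊆ untilSet A' C' :=
  fun _ ⟨j, hj, hk⟩ => ⟨j, hC hj, fun k hkj => hA (hk k hkj)⟩

theorem shift_mem_of_mem_stable {C : Set (GenericPath R)} {π : GenericPath R} {i j : ℕ}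
    (hi : π.1 i ∈ stable C) (hij : i ≤ j) : shift j π ∈ C :=
  hi _ (by simpa using π.2.reach hij)

section Topology

variable [TopologicalSpace S]

theorem continuous_shift (n : ℕ) : Continuous (shift n : GenericPath R → GenericPath R) :=
  (continuous_pi fun k =>
    (continuous_apply (k + n)).comp continuous_subtype_val).subtype_mk fun π => (shift n π).2

theorem isOpen_untilSet {A C : Set (GenericPath R)} (hA : IsOpen A) (hC : IsOpen C) :
    IsOpen (untilSet A C) := by
  have : untilSet A C = ⋃ j, shift j ⁻¹' C ∩ ⋂ k ∈ Finset.range j, shift k ⁻¹' A := by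
    ext π; simp [untilSet]
  rw [this]
  exact isOpen_iUnion fun j => (hC.preimage (continuous_shift j)).inter
    (isOpen_biInter_finset fun k _ => hA.preimage (continuous_shift k))

variable [DiscreteTopology S]

theorem isClopen_setOf_head_mem (p : Set S) : IsClopen {π : GenericPath R | π.1 0 ∈ p} :=
  (isClopen_discrete p).preimage ((continuous_apply 0).comp continuous_subtype_val)

theorem exists_cylinder_subset {C : Set (GenericPath R)} (hC : IsOpen C) {π : GenericPath R}
    (hπ : π ∈ C) : ∃ n, ∀ ω : GenericPath R, (∀ k ≤ n, ω.1 k = π.1 k) → ω ∈ C := by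
  obtain ⟨U, hU, rfl⟩ := isOpen_induced_iff.1 hC
  obtain ⟨_, ⟨x, n, rfl⟩, hx, hsub⟩ :=
    (PiNat.isTopologicalBasis_cylinders fun _ => S).exists_subset_of_mem_open hπ hU
  exact ⟨n, fun ω hω => hsub fun k hk => (hω k hk.le).trans (hx k hk)⟩

-- Reachable sets shrink along a path, hence are eventually constant; from then on every word
-- reachable once is reachable forever, and genericity makes it occur.
theorem exists_mem_stable [Finite S] {C : Set (GenericPath R)} (hC : IsClosed C)
    {π : GenericPath R} (hπ : ∀ j, shift j π ∈ C) : ∃ j, π.1 j ∈ stable C := by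
  let reachable : ℕ →o (Set S)ᵒᵈ :=
    ⟨fun n => OrderDual.toDual {t | ReflTransGen R (π.1 n) t},
      fun _ _ hij _ ht => (π.2.reach hij).trans ht⟩
  obtain ⟨j, hj⟩ := WellFoundedGT.monotone_chain_condition reachable
  refine ⟨j, fun ω hω => by_contra fun hωC => ?_⟩
  have hreach : ∀ n, ReflTransGen R (π.1 n) (ω.1 0) := fun n => by
    have hmax : reachable j = reachable (max j n) := hj _ (le_max_left j n)
    have : ω.1 0 ∈ OrderDual.ofDual (reachable (max j n)) := hmax ▸ hω
    exact (π.2.reach (le_max_right j n)).trans this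
  obtain ⟨l, hl⟩ := exists_cylinder_subset hC.isOpen_compl hωC
  obtain ⟨i, hi⟩ := (π.2.frequently ω.1 ω.2.step hreach l).exists
  exact hl (shift i π) hi (hπ i)

theorem compl_untilSet [Finite S] {A C : Set (GenericPath R)} (hC : IsOpen C) :
    (untilSet A C)ᶜ = releaseSet Aᶜ Cᶜ := by
  ext π
  constructor
  · intro hπ
    by_cases hex : ∃ j, shift j π ∈ C
    · classical
      have hmin : ∀ k < Nat.find hex, shift k π ∉ C := fun k => Nat.find_min hex
      obtain ⟨k, hk, hkA⟩ : ∃ k < Nat.find hex, shift k π ∉ A := by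
        by_contra! hA
        exact hπ ⟨_, Nat.find_spec hex, hA⟩
      exact ⟨k, .inr ⟨hkA, hmin k hk⟩, fun i hi => hmin i (hi.trans hk)⟩
    · have hnever : ∀ j, shift j π ∈ Cᶜ := fun j hj => hex ⟨j, hj⟩
      obtain ⟨j, hj⟩ := exists_mem_stable hC.isClosed_compl hnever
      exact ⟨j, .inl (by simpa using hj), fun k _ => hnever k⟩
  · rintro ⟨i, hi, hbefore⟩ ⟨j, hjC, hjA⟩
    have hij : i ≤ j := not_lt.1 fun hji => hbefore j hji hjC
    rcases hi with hstable | ⟨hA, hC'⟩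
    · exact shift_mem_of_mem_stable (C := Cᶜ) (by simpa using hstable) hij hjC
    · rcases hij.eq_or_lt with rfl | hlt
      · exact hC' hjC
      · exact hA (hjA i hlt)

theorem isClopen_untilSet [Finite S] {A C : Set (GenericPath R)} (hA : IsClopen A)
    (hC : IsClopen C) : IsClopen (untilSet A C) := by
  refine ⟨isOpen_compl_iff.1 ?_, isOpen_untilSet hA.isOpen hC.isOpen⟩
  rw [compl_untilSet hC.isOpen]
  exact isOpen_untilSet hC.compl.isOpen
    ((isClopen_setOf_head_mem _).union (hA.compl.inter hC.compl)).isOpen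

end Topology

end Paths

open GenericPath

section Formulas

variable {AP Var : Type}

theorem size_pos (φ : PD AP Var) : 0 < φ.size := by cases φ <;> simp [PD.size]

theorem exists_ge_add_iff {p : ℕ → Prop} {i n : ℕ} :
    (∃ j, i + n ≤ j ∧ p j) ↔ ∃ j, i ≤ j ∧ p (j + n) :=
  ⟨fun ⟨j, hj, hp⟩ => ⟨j - n, by omega, by rwa [Nat.sub_add_cancel (by omega)]⟩,
    fun ⟨j, hj, hp⟩ => ⟨j + n, by omega, hp⟩⟩

theorem forall_ge_add_iff {p : ℕ → Prop} {i n : ℕ} :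
    (∀ j, i + n ≤ j → p j) ↔ ∀ j, i ≤ j → p (j + n) := by
  simpa using not_congr (exists_ge_add_iff (p := fun j => ¬p j) (i := i) (n := n))

theorem sat_shift (w : ℕ → Set AP) (v : Var → ℕ) (n : ℕ) (φ : PD AP Var) (i : ℕ) :
    PD.Sat (fun k => w (k + n)) i v φ ↔ PD.Sat w (i + n) v φ := by
  induction φ generalizing i with
  | next a ih => simp only [PD.Sat, ih, add_right_comm]
  | _ => simp only [PD.Sat, exists_ge_add_iff, forall_ge_add_iff, ← add_assoc, add_le_add_iff_right,
      add_lt_add_iff_right, *]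

theorem eventually_sat_const (v : Var → ℕ) (φ : PD AP Var) :
    ∀ᶠ N in atTop, ∀ (w : ℕ → Set AP) (i : ℕ), PD.Sat w i v φ → PD.Sat w i (fun _ => N) φ := by
  induction φ with
  | atom a => exact .of_forall fun _ _ _ => id
  | natom a => exact .of_forall fun _ _ _ => id
  | and a c iha ihc =>
    filter_upwards [iha, ihc] with N ha hc w i h
    exact ⟨ha w i h.1, hc w i h.2⟩
  | or a c iha ihc =>
    filter_upwards [iha, ihc] with N ha hc w i h
    exact h.imp (ha w i) (hc w i)
  | next a iha =>
    filter_upwards [iha] with N ha w i h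
    exact ha w (i + 1) h
  | untl a c iha ihc =>
    filter_upwards [iha, ihc] with N ha hc w i ⟨j, hij, hj, hk⟩
    exact ⟨j, hij, hc w j hj, fun k hik hkj => ha w k (hk k hik hkj)⟩
  | release a c iha ihc =>
    filter_upwards [iha, ihc] with N ha hc w i h j hij
    exact (h j hij).imp (hc w j) fun ⟨k, hik, hkj, hk⟩ => ⟨k, hik, hkj, ha w k hk⟩
  | always a iha =>
    filter_upwards [iha] with N ha w i h j hij
    exact ha w j (h j hij)
  | evVar x a iha =>
    filter_upwards [iha, eventually_ge_atTop (v x)] with N ha hN w i ⟨j, hij, hjv, hj⟩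
    exact ⟨j, hij, by dsimp only; omega, ha w j hj⟩

end Formulas

section Truth

variable {AP Var : Type} {S : Type*} {R : S → S → Prop}

/-- The generic paths whose trace under the labelling `L` satisfies `v(φ)`. -/
def truth (R : S → S → Prop) (L : S → Set AP) (v : Var → ℕ) (φ : PD AP Var) : Set (GenericPath R) :=
  {π | PD.Sat (fun i => L (π.1 i)) 0 v φ}

variable (R) (L : S → Set AP) (v : Var → ℕ) (a c : PD AP Var)

theorem shift_mem_truth {n : ℕ} {π : GenericPath R} :
    shift n π ∈ truth R L v a ↔ PD.Sat (fun i => L (π.1 i)) n v a := by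
  have := sat_shift (fun i => L (π.1 i)) v n a 0
  rwa [zero_add] at this

theorem truth_next : truth R L v a.next = shift 1 ⁻¹' truth R L v a := by
  ext π
  change PD.Sat _ _ _ _ ↔ _
  simp [shift_mem_truth, PD.Sat]

theorem truth_untl : truth R L v (a.untl c) = untilSet (truth R L v a) (truth R L v c) := by
  ext π
  change PD.Sat _ _ _ _ ↔ _
  simp [untilSet, shift_mem_truth, PD.Sat]

theorem compl_truth_release : (truth R L v (a.release c))ᶜ =
    untilSet (truth R L v a)ᶜ (truth R L v c)ᶜ := by
  ext π
  change ¬PD.Sat _ _ _ _ ↔ _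
  simp [untilSet, shift_mem_truth, PD.Sat, or_iff_not_imp_left]

theorem compl_truth_always : (truth R L v a.always)ᶜ = untilSet Set.univ (truth R L v a)ᶜ := by
  ext π
  change ¬PD.Sat _ _ _ _ ↔ _
  simp [untilSet, shift_mem_truth, PD.Sat]

theorem truth_evVar (x : Var) :
    truth R L v (a.evVar x) = {π | ∃ j ≤ v x, shift j π ∈ truth R L v a} := by
  ext π
  change PD.Sat _ _ _ _ ↔ _
  simp [shift_mem_truth, PD.Sat]

section Clopen

variable [Finite S] [TopologicalSpace S] [DiscreteTopology S]

theorem isClopen_truth (φ : PD AP Var) : IsClopen (truth R L v φ) := by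
  induction φ with
  | atom a => exact isClopen_setOf_head_mem {s | a ∈ L s}
  | natom a => exact isClopen_setOf_head_mem {s | a ∉ L s}
  | and a c iha ihc => exact iha.inter ihc
  | or a c iha ihc => exact iha.union ihc
  | next a iha => exact truth_next R L v a ▸ iha.preimage (continuous_shift 1)
  | untl a c iha ihc => exact truth_untl R L v a c ▸ isClopen_untilSet iha ihc
  | release a c iha ihc =>
    rw [← isClopen_compl_iff, compl_truth_release]
    exact isClopen_untilSet iha.compl ihc.compl
  | always a iha =>
    rw [← isClopen_compl_iff, compl_truth_always]
    exact isClopen_untilSet isClopen_univ iha.compl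
  | evVar x a iha =>
    rw [truth_evVar, show {π : GenericPath R | ∃ j ≤ v x, shift j π ∈ truth R L v a} =
      ⋃ j ∈ Set.Iic (v x), shift j ⁻¹' truth R L v a by ext; simp]
    exact (Set.finite_Iic _).isClopen_biUnion fun j _ => iha.preimage (continuous_shift j)

theorem compl_truth_untl : (truth R L v (a.untl c))ᶜ =
    releaseSet (truth R L v a)ᶜ (truth R L v c)ᶜ := by
  rw [truth_untl, compl_untilSet (isClopen_truth R L v c).isOpen]

theorem truth_release : truth R L v (a.release c) = releaseSet (truth R L v a) (truth R L v c) := by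
  rw [← compl_compl (truth R L v (a.release c)), compl_truth_release,
    compl_untilSet (isClopen_truth R L v c).compl.isOpen, compl_compl, compl_compl]

theorem truth_always : truth R L v a.always = releaseSet ∅ (truth R L v a) := by
  rw [← compl_compl (truth R L v a.always), compl_truth_always,
    compl_untilSet (isClopen_truth R L v a).compl.isOpen, compl_compl, Set.compl_univ]

end Clopen

end Truth

section CoSafety

/-- Co-safety formulas over finite words: their truth is witnessed by a finite prefix of a path.
`hold a` is the counterpart of a bounded `□`: it asks for `a` during a whole time window. -/
inductive CoSafe (S : Type*)
  | lit : Set S → CoSafe S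
  | and : CoSafe S → CoSafe S → CoSafe S
  | or : CoSafe S → CoSafe S → CoSafe S
  | next : CoSafe S → CoSafe S
  | untl : CoSafe S → CoSafe S → CoSafe S
  | hold : CoSafe S → CoSafe S

variable {S : Type*}

namespace CoSafe

/-- Truth of a formula at the first letter of a finite word; no formula holds of the empty word.
The window of `hold` is a function `h` of the number of remaining letters. -/
def Sat (h : ℕ → ℕ) : CoSafe S → List S → Prop
  | lit p, u => ∃ s ∈ u.head?, s ∈ p
  | and a c, u => a.Sat h u ∧ c.Sat h u
  | or a c, u => a.Sat h u ∨ c.Sat h u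
  | next a, u => a.Sat h u.tail
  | untl a c, u => ∃ j, c.Sat h (u.drop j) ∧ ∀ k < j, a.Sat h (u.drop k)
  | hold a, u => ∀ k ≤ h u.length, a.Sat h (u.drop k)

/-- The subformulas whose main operator is `next`, `untl` or `hold`. Their truth values, together
with the current letter, determine those of all subformulas. -/
def temporal : CoSafe S → Set (CoSafe S)
  | lit _ => ∅
  | and a c => temporal a ∪ temporal c
  | or a c => temporal a ∪ temporal c
  | next a => insert (next a) (temporal a)
  | untl a c => insert (untl a c) (temporal a ∪ temporal c)
  | hold a => insert (hold a) (temporal a)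

theorem not_sat_nil (h : ℕ → ℕ) (χ : CoSafe S) : ¬χ.Sat h [] := by
  induction χ with
  | lit p => simp [Sat]
  | and a c iha _ => exact fun hs => iha hs.1
  | or a c iha ihc => exact fun hs => hs.elim iha ihc
  | next _ iha => exact iha
  | untl a c _ ihc => exact fun ⟨_, hj, _⟩ => ihc (by simpa using hj)
  | hold _ iha => exact fun hs => iha (hs 0 (Nat.zero_le _))

theorem sat_untl_cons {h : ℕ → ℕ} {a c : CoSafe S} {s : S} {u : List S} :
    (untl a c).Sat h (s :: u) ↔
      c.Sat h (s :: u) ∨ a.Sat h (s :: u) ∧ (untl a c).Sat h u := by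
  constructor
  · rintro ⟨_ | j, hj, hk⟩
    · exact .inl hj
    · exact .inr ⟨hk 0 j.succ_pos, j, hj, fun k hkj => hk (k + 1) (by omega)⟩
  · rintro (hc | ⟨ha, j, hj, hk⟩)
    · exact ⟨0, hc, by simp⟩
    · exact ⟨j + 1, hj, fun | 0, _ => ha | k + 1, hkj => hk k (by omega)⟩

theorem finite_temporal (ψ : CoSafe S) : (temporal ψ).Finite := by
  induction ψ <;> simp_all [temporal]

theorem temporal_subset {χ ψ : CoSafe S} (hχ : χ ∈ temporal ψ) : temporal χ ⊆ temporal ψ := by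
  induction ψ with
  | lit p => exact hχ.elim
  | and a c iha ihc | or a c iha ihc =>
    exact hχ.elim (fun h => (iha h).trans Set.subset_union_left)
      fun h => (ihc h).trans Set.subset_union_right
  | next a iha | hold a iha =>
    rcases hχ with rfl | h
    · rfl
    · exact (iha h).trans (Set.subset_insert _ _)
  | untl a c iha ihc =>
    rcases hχ with rfl | h | h
    · rfl
    · exact ((iha h).trans Set.subset_union_left).trans (Set.subset_insert _ _)
    · exact ((ihc h).trans Set.subset_union_right).trans (Set.subset_insert _ _)

theorem temporal_subset_of_hold_mem {a ψ : CoSafe S} (ha : hold a ∈ temporal ψ) :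
    temporal a ⊆ temporal ψ :=
  (Set.subset_insert _ _).trans (temporal_subset ha)

/-- The word `u'` under the window `h'` simulates `u` under `h`: it starts with the same letter and
satisfies all temporal subformulas of `ψ` that `u` satisfies. -/
structure Simulates (h h' : ℕ → ℕ) (ψ : CoSafe S) (u u' : List S) : Prop where
  head : u.head? = u'.head?
  temporal : ∀ χ ∈ temporal ψ, χ.Sat h u → χ.Sat h' u'

theorem Simulates.sat {h h' : ℕ → ℕ} {ψ : CoSafe S} {u u' : List S} (hs : Simulates h h' ψ u u')
    {χ : CoSafe S} (hχ : χ.temporal ⊆ ψ.temporal) (hu : χ.Sat h u) : χ.Sat h' u' := by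
  induction χ with
  | lit p =>
    obtain ⟨t, ht, htp⟩ := hu
    exact ⟨t, hs.head ▸ ht, htp⟩
  | and a c iha ihc =>
    exact ⟨iha (Set.union_subset_iff.1 hχ).1 hu.1, ihc (Set.union_subset_iff.1 hχ).2 hu.2⟩
  | or a c iha ihc =>
    exact hu.imp (iha (Set.union_subset_iff.1 hχ).1) (ihc (Set.union_subset_iff.1 hχ).2)
  | next | untl | hold => exact hs.temporal _ (hχ (Set.mem_insert _ _)) hu

theorem Simulates.cons {h h' : ℕ → ℕ} {ψ : CoSafe S} {u u' : List S}
    (hs : Simulates h h' ψ u u') {s : S}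
    (hhold : ∀ a, hold a ∈ ψ.temporal → (hold a).Sat h (s :: u) → a.Sat h' (s :: u') →
      (hold a).Sat h' (s :: u')) : Simulates h h' ψ (s :: u) (s :: u') := by
  suffices hsub : ∀ χ : CoSafe S, χ.temporal ⊆ ψ.temporal → χ.Sat h (s :: u) → χ.Sat h' (s :: u')
    from ⟨rfl, fun χ hχ => hsub χ (temporal_subset hχ)⟩
  intro χ hχ hu
  induction χ with
  | lit p => exact hu
  | and a c iha ihc =>
    exact ⟨iha (Set.union_subset_iff.1 hχ).1 hu.1, ihc (Set.union_subset_iff.1 hχ).2 hu.2⟩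
  | or a c iha ihc =>
    exact hu.imp (iha (Set.union_subset_iff.1 hχ).1) (ihc (Set.union_subset_iff.1 hχ).2)
  | next a _ => exact hs.sat ((Set.subset_insert _ _).trans hχ) hu
  | untl a c iha ihc =>
    have hac := Set.union_subset_iff.1 ((Set.subset_insert _ _).trans hχ)
    exact sat_untl_cons.2 <| (sat_untl_cons.1 hu).imp (ihc hac.2) <|
      And.imp (iha hac.1) (hs.sat hχ)
  | hold a iha =>
    exact hhold a (hχ (Set.mem_insert _ _)) hu
      (iha ((Set.subset_insert _ _).trans hχ) (hu 0 (Nat.zero_le _)))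

/-- The information about a word that matters for `ψ`: its first letter and the temporal subformulas
of `ψ` that it satisfies. -/
def profile (h : ℕ → ℕ) (ψ : CoSafe S) (u : List S) : Option S × Set (CoSafe S) :=
  (u.head?, {χ ∈ ψ.temporal | χ.Sat h u})

/-- An upper bound for the number of profiles of nonempty words. -/
noncomputable def profileBound (ψ : CoSafe S) : ℕ := Nat.card S * 2 ^ ψ.temporal.ncard

theorem head_eq_of_profile_eq {h : ℕ → ℕ} {ψ : CoSafe S} {u u' : List S}
    (hp : profile h ψ u = profile h ψ u') : u.head? = u'.head? :=
  (Prod.ext_iff.1 hp).1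

theorem sat_iff_of_profile_eq {h : ℕ → ℕ} {ψ χ : CoSafe S} {u u' : List S}
    (hp : profile h ψ u = profile h ψ u') (hχ : χ ∈ ψ.temporal) : χ.Sat h u ↔ χ.Sat h u' := by
  have hmem : (χ ∈ ψ.temporal ∧ χ.Sat h u) ↔ (χ ∈ ψ.temporal ∧ χ.Sat h u') :=
    Set.ext_iff.1 (Prod.ext_iff.1 hp).2 χ
  simpa only [hχ, true_and] using hmem

theorem exists_drop_profile_eq [Finite S] (h : ℕ → ℕ) (ψ : CoSafe S) {u : List S} {N : ℕ}
    (hN : profileBound ψ < N) (hu : N ≤ u.length) :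
    ∃ i j, i < j ∧ j < N ∧ profile h ψ (u.drop i) = profile h ψ (u.drop j) := by
  let profiles : Set (Option S × Set (CoSafe S)) := Set.range some ×ˢ 𝒫 ψ.temporal
  have hcard : profiles.ncard < (Set.Iio N).ncard := by
    rwa [Set.ncard_prod, Set.ncard_powerset _ ψ.finite_temporal, ← Set.image_univ,
      Set.ncard_image_of_injective _ (Option.some_injective S), Set.ncard_univ, Set.ncard_Iio_nat]
  have hmaps : ∀ i ∈ Set.Iio N, profile h ψ (u.drop i) ∈ profiles := by
    intro i hi
    obtain ⟨s, w, hw⟩ := List.exists_cons_of_ne_nil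
      (List.ne_nil_of_length_pos (l := u.drop i) (by simp at hi ⊢; omega))
    exact ⟨⟨s, by simp [profile, hw]⟩, fun χ hχ => hχ.1⟩
  have hfin : profiles.Finite := (Set.finite_range some).prod ψ.finite_temporal.powerset
  obtain ⟨i, hi, j, hj, hne, hp⟩ :=
    Set.exists_ne_map_eq_of_ncard_lt_of_maps_to hcard hmaps hfin
  rcases hne.lt_or_gt with hij | hji
  · exact ⟨i, j, hij, hj, hp⟩
  · exact ⟨j, i, hji, hi, hp.symm⟩

end CoSafe

end CoSafety

open CoSafe

section Prefixes

variable {S : Type*} {R : S → S → Prop}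

/-- The finite words that are prefixes of generic paths. -/
def IsGenericPrefix (R : S → S → Prop) (u : List S) : Prop :=
  ∃ (π : GenericPath R) (n : ℕ), take n π = u

theorem IsGenericPrefix.drop {u : List S} (hu : IsGenericPrefix R u) (k : ℕ) :
    IsGenericPrefix R (u.drop k) := by
  obtain ⟨π, n, rfl⟩ := hu
  exact ⟨shift k π, n - k, (drop_take k n π).symm⟩

theorem IsGenericPrefix.cons {s : S} {u u' : List S} (hu : IsGenericPrefix R (s :: u))
    (hu' : IsGenericPrefix R u') (hhead : u.head? = u'.head?) : IsGenericPrefix R (s :: u') := by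
  obtain ⟨ω, _ | m, rfl⟩ := hu'
  · rwa [List.head?_eq_none_iff.1 hhead] at hu
  · obtain ⟨π, _ | _ | n, hπ⟩ := hu
    · cases hπ
    · obtain ⟨rfl, rfl⟩ := List.cons.inj hπ
      simp [take_succ] at hhead
    · rw [take_succ, take_succ] at hπ
      obtain ⟨rfl, rfl⟩ := List.cons.inj hπ
      have hstep : R (π.1 0) (ω.1 0) := by
        have : π.1 1 = ω.1 0 := by simpa [take_succ] using hhead
        exact this ▸ π.2.step 0
      exact ⟨GenericPath.cons _ ω hstep, m + 2, take_succ _ _⟩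

theorem IsGenericPrefix.append_simulates {ψ : CoSafe S} {w w' : List S}
    (hw' : IsGenericPrefix R w') (hs : Simulates 0 0 ψ w w') (x : List S)
    (hx : IsGenericPrefix R (x ++ w)) :
    IsGenericPrefix R (x ++ w') ∧ Simulates 0 0 ψ (x ++ w) (x ++ w') := by
  induction x with
  | nil => exact ⟨hw', hs⟩
  | cons s x ih =>
    obtain ⟨hpre, hsim⟩ := ih (hx.drop 1)
    exact ⟨hx.cons hpre hsim.head, hsim.cons fun a _ _ ha k hk => by
      rwa [Nat.le_zero.1 hk]⟩

theorem exists_short_prefix [Finite S] {ψ : CoSafe S} {u : List S}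
    (hu : IsGenericPrefix R u) (hsat : ψ.Sat 0 u) :
    ∃ u', IsGenericPrefix R u' ∧ u'.head? = u.head? ∧ ψ.Sat 0 u' ∧
      u'.length ≤ profileBound ψ := by
  induction hn : u.length using Nat.strong_induction_on generalizing u with
  | _ n ih =>
    rcases le_or_gt u.length (profileBound ψ) with hle | hlt
    · exact ⟨u, hu, rfl, hsat, hle⟩
    obtain ⟨i, j, hij, hj, hp⟩ := exists_drop_profile_eq 0 ψ hlt le_rfl
    have hsim : Simulates 0 0 ψ (u.drop i) (u.drop j) :=
      ⟨head_eq_of_profile_eq hp, fun χ hχ => (sat_iff_of_profile_eq hp hχ).1⟩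
    obtain ⟨hpre, hsim'⟩ := (hu.drop j).append_simulates hsim (u.take i)
      ((List.take_append_drop i u).symm ▸ hu)
    rw [List.take_append_drop] at hsim'
    have hlen : (u.take i ++ u.drop j).length < n := by simp; omega
    obtain ⟨u', hu', hhead, hsat', hlen'⟩ := ih _ hlen hpre (hsim'.sat subset_rfl hsat) rfl
    exact ⟨u', hu', hhead.trans hsim'.head.symm, hsat', hlen'⟩

end Prefixes

section Pumping

variable {S : Type*} {R : S → S → Prop}

/-- A word is cut, from its end, into blocks of length `M`. At offset `k` of a block this window
reaches exactly to the end of the following block; the argument is the number of letters left. -/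
def blockWindow (M : ℕ) (l : ℕ) : ℕ := (l - 1) % M + M

theorem sat_hold_drop_iff {M β k : ℕ} {a : CoSafe S} {B : List S} (hB : B.length = M * (β + 1))
    (hk : k < M) : (hold a).Sat (blockWindow M) (B.drop k) ↔
      ∀ r, k ≤ r → r < 2 * M → a.Sat (blockWindow M) (B.drop r) := by
  have hwindow : blockWindow M (B.drop k).length = 2 * M - 1 - k := by
    have : M * (β + 1) - k - 1 = (M - 1 - k) + M * β := by rw [mul_add_one]; omega
    rw [blockWindow, List.length_drop, hB, this, Nat.add_mul_mod_self_left,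
      Nat.mod_eq_of_lt (by omega)]
    omega
  simp only [CoSafe.Sat, hwindow, List.drop_drop]
  refine ⟨fun h r hkr hr => ?_, fun h r hr => h _ (by omega) (by omega)⟩
  simpa [Nat.add_sub_cancel' hkr] using h (r - k) (by omega)

/-- The subformulas of `ψ` that hold at each of the first `M` letters of `B`. -/
def blockInvariants (M : ℕ) (ψ : CoSafe S) (B : List S) : Set (CoSafe S) :=
  {a | a.temporal ⊆ ψ.temporal ∧ ∀ k < M, a.Sat (blockWindow M) (B.drop k)}

/-- The word `u'` simulates `u` with constant window `V`, and `e` letters of its current block have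
been written already: every formula of `D` holds at the first `e + 1` letters, and every formula
held by `u` even at `V` more. -/
structure Pumped (R : S → S → Prop) (M V : ℕ) (ψ : CoSafe S) (D : Set (CoSafe S)) (u u' : List S)
    (e : ℕ) : Prop where
  isPrefix : IsGenericPrefix R u'
  simulates : Simulates (blockWindow M) (fun _ => V) ψ u u'
  hold : ∀ a, hold a ∈ ψ.temporal → (hold a).Sat (blockWindow M) u →
    ∀ k ≤ e + V, a.Sat (fun _ => V) (u'.drop k)
  block : ∀ a ∈ D, ∀ k ≤ e, a.Sat (fun _ => V) (u'.drop k)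

variable {M V : ℕ} {ψ : CoSafe S} {D D' : Set (CoSafe S)} {u u' : List S} {e e' : ℕ}

theorem Pumped.congr {w : List S} (h : Pumped R M V ψ D u u' e)
    (hp : profile (blockWindow M) ψ u = profile (blockWindow M) ψ w) :
    Pumped R M V ψ D w u' e where
  isPrefix := h.isPrefix
  simulates := ⟨(head_eq_of_profile_eq hp).symm.trans h.simulates.head, fun χ hχ hw =>
    h.simulates.temporal χ hχ ((sat_iff_of_profile_eq hp hχ).2 hw)⟩
  hold a ha hw := h.hold a ha ((sat_iff_of_profile_eq hp ha).2 hw)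
  block := h.block

theorem Pumped.cons (h : Pumped R M V ψ D u u' e) {s : S} (hs : IsGenericPrefix R (s :: u))
    (hhold : ∀ a, CoSafe.hold a ∈ ψ.temporal → (CoSafe.hold a).Sat (blockWindow M) (s :: u) →
      ∀ k < e' + V, a.Sat (fun _ => V) (u'.drop k))
    (hblock : ∀ a ∈ D', a.temporal ⊆ ψ.temporal ∧ a.Sat (blockWindow M) (s :: u) ∧
      ∀ k < e', a.Sat (fun _ => V) (u'.drop k)) :
    Pumped R M V ψ D' (s :: u) (s :: u') e' := by
  have hsim : Simulates (blockWindow M) (fun _ => V) ψ (s :: u) (s :: u') := by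
    refine h.simulates.cons fun a ha hu ha' k hk => ?_
    rcases k with _ | k
    · exact ha'
    · exact hhold a ha hu k (Nat.lt_add_left e' hk)
  refine ⟨hs.cons h.isPrefix h.simulates.head, hsim, fun a ha hu k hk => ?_, fun a ha k hk => ?_⟩
  · rcases k with _ | k
    · exact hsim.sat (temporal_subset_of_hold_mem ha) (hu 0 (Nat.zero_le _))
    · exact hhold a ha hu k (by omega)
  · obtain ⟨hsub, ha0, ha'⟩ := hblock a ha
    rcases k with _ | k
    · exact hsim.sat hsub ha0
    · exact ha' k (by omega)

section Block

variable {B : List S} {β : ℕ} (hB : B.length = M * (β + 1)) (hpre : IsGenericPrefix R B)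
include hB hpre

theorem Pumped.cons_in_block {k : ℕ} (hk : k + 1 < M)
    (h : Pumped R M V ψ (blockInvariants M ψ B) (B.drop (k + 1)) u' e) :
    ∃ u'', Pumped R M V ψ (blockInvariants M ψ B) (B.drop k) u'' (e + 1) := by
  have hs := List.drop_eq_getElem_cons (l := B) (i := k) (by rw [hB, mul_add_one]; omega)
  rw [hs]
  refine ⟨_, h.cons (hs ▸ hpre.drop k) (fun a ha hu i hi => ?_) fun a ha => ?_⟩
  · rw [← hs, sat_hold_drop_iff hB (by omega)] at hu
    exact h.hold a ha ((sat_hold_drop_iff hB hk).2 fun r hr => hu r (by omega)) i (by omega)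
  · exact ⟨ha.1, hs ▸ ha.2 k (by omega), fun i hi => h.block a ha i (by omega)⟩

theorem Pumped.climb {i j : ℕ} (hij : i ≤ j) (hj : j < M)
    (h : Pumped R M V ψ (blockInvariants M ψ B) (B.drop j) u' e) :
    ∃ u'', Pumped R M V ψ (blockInvariants M ψ B) (B.drop i) u'' (e + (j - i)) := by
  induction hij using Nat.decreasingInduction generalizing u' e with
  | self => exact ⟨u', by simpa using h⟩
  | of_succ k hkj ih =>
    obtain ⟨u'', hu''⟩ := ih h
    obtain ⟨u₃, hu₃⟩ := hu''.cons_in_block hB hpre (by omega)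
    exact ⟨u₃, by convert hu₃ using 1; omega⟩

theorem Pumped.loop {i j : ℕ} (hij : i < j) (hj : j < M)
    (hp : profile (blockWindow M) ψ (B.drop i) = profile (blockWindow M) ψ (B.drop j))
    (h : Pumped R M V ψ (blockInvariants M ψ B) (B.drop i) u' e) (n : ℕ) :
    ∃ u'' e', n ≤ e' ∧ Pumped R M V ψ (blockInvariants M ψ B) (B.drop i) u'' e' := by
  induction n with
  | zero => exact ⟨u', e, Nat.zero_le _, h⟩
  | succ n ih =>
    obtain ⟨u'', e', hn, hu''⟩ := ih
    obtain ⟨u₃, hu₃⟩ := (hu''.congr hp).climb hB hpre hij.le hj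
    exact ⟨u₃, _, by omega, hu₃⟩

theorem Pumped.enter_block (hM : 0 < M) (he : V ≤ e)
    (h : Pumped R M V ψ (blockInvariants M ψ (B.drop M)) (B.drop M) u' e) :
    ∃ u'', Pumped R M V ψ (blockInvariants M ψ B) (B.drop (M - 1)) u'' 0 := by
  have hs := List.drop_eq_getElem_cons (l := B) (i := M - 1) (by rw [hB, mul_add_one]; omega)
  rw [Nat.sub_add_cancel hM] at hs
  rw [hs]
  refine ⟨_, h.cons (hs ▸ hpre.drop (M - 1)) (fun a ha hu i hi => ?_) fun a ha => ?_⟩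
  · refine h.block a ⟨temporal_subset_of_hold_mem ha, fun k hk => ?_⟩ i (by omega)
    rw [← hs, sat_hold_drop_iff hB (by omega)] at hu
    rw [List.drop_drop]
    exact hu (M + k) (by omega) (by omega)
  · exact ⟨ha.1, hs ▸ ha.2 (M - 1) (by omega), fun i hi => absurd hi i.not_lt_zero⟩

theorem Pumped.block_step [Finite S] (hM : profileBound ψ < M) (he : V ≤ e)
    (h : Pumped R M V ψ (blockInvariants M ψ (B.drop M)) (B.drop M) u' e) :
    ∃ u'' e', V ≤ e' ∧ Pumped R M V ψ (blockInvariants M ψ B) B u'' e' := by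
  obtain ⟨i, j, hij, hj, hp⟩ := exists_drop_profile_eq (blockWindow M) ψ (u := B) hM
    (by rw [hB]; exact Nat.le_mul_of_pos_right _ β.succ_pos)
  obtain ⟨u₁, hu₁⟩ := h.enter_block hB hpre (by omega) he
  obtain ⟨u₂, hu₂⟩ := hu₁.climb hB hpre (i := i) (by omega) (by omega)
  obtain ⟨u₃, e₃, he₃, hu₃⟩ := hu₂.loop hB hpre hij hj hp V
  obtain ⟨u₄, hu₄⟩ := hu₃.climb hB hpre (Nat.zero_le i) (by omega)
  exact ⟨u₄, _, by omega, hu₄⟩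

end Block

theorem exists_pumped [Finite S] (hM : profileBound ψ < M) (V : ℕ) {u : List S}
    (hu : IsGenericPrefix R u) {β : ℕ} (hlen : u.length = M * β) :
    ∃ u' e, V ≤ e ∧ Pumped R M V ψ (blockInvariants M ψ u) u u' e := by
  induction β generalizing u with
  | zero =>
    obtain rfl : u = [] := List.length_eq_zero_iff.1 hlen
    refine ⟨[], V, le_rfl, hu, ⟨rfl, fun χ _ h => (not_sat_nil _ χ h).elim⟩,
      fun a _ h => (not_sat_nil _ _ h).elim, fun a ha => (not_sat_nil _ a (ha.2 0 ?_)).elim⟩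
    omega
  | succ β ih =>
    obtain ⟨u', e, he, h⟩ := ih (hu.drop M) (by rw [List.length_drop, hlen, mul_add_one]; omega)
    exact h.block_step hlen hu hM he

theorem exists_pumped_prefix [Finite S] (hM : profileBound ψ < M) (V : ℕ) {u : List S}
    (hu : IsGenericPrefix R u) {β : ℕ} (hlen : u.length = M * β)
    (hsat : ψ.Sat (blockWindow M) u) :
    ∃ u', IsGenericPrefix R u' ∧ u'.head? = u.head? ∧ ψ.Sat (fun _ => V) u' := by
  obtain ⟨u', e, -, h⟩ := exists_pumped hM V hu hlen
  exact ⟨u', h.isPrefix, h.simulates.head.symm, h.simulates.sat subset_rfl hsat⟩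

end Pumping

section Certificates

variable {S : Type*} {R : S → S → Prop}

/-- Every path of `A` has `χ` satisfied by all its sufficiently long prefixes. -/
def Detects (h : ℕ → ℕ) (χ : CoSafe S) (A : Set (GenericPath R)) : Prop :=
  ∀ π ∈ A, ∀ᶠ n in atTop, χ.Sat h (take n π)

/-- A prefix of length at most `N` satisfying `χ` guarantees that the path lies in `A`. -/
def Certifies (h : ℕ → ℕ) (N : ℕ) (χ : CoSafe S) (A : Set (GenericPath R)) : Prop :=
  ∀ π n, n ≤ N → χ.Sat h (take n π) → π ∈ A

variable {h : ℕ → ℕ} {N : ℕ} {a c : CoSafe S} {A A' C : Set (GenericPath R)}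

theorem Detects.mono (ha : Detects h a A) (hA : A' ⊆ A) : Detects h a A' :=
  fun π hπ => ha π (hA hπ)

theorem Certifies.mono (ha : Certifies h N a A) (hA : A ⊆ A') : Certifies h N a A' :=
  fun π n hn hs => hA (ha π n hn hs)

theorem detects_lit (p : Set S) : Detects h (lit p) {π : GenericPath R | π.1 0 ∈ p} := by
  intro π hπ
  filter_upwards [eventually_gt_atTop 0] with n hn
  obtain ⟨n, rfl⟩ := Nat.exists_eq_succ_of_ne_zero hn.ne'
  exact ⟨π.1 0, by simp [take_succ], hπ⟩

theorem certifies_lit (p : Set S) : Certifies h N (lit p) {π : GenericPath R | π.1 0 ∈ p} := by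
  rintro π (_ | n) _ ⟨s, hs, hsp⟩
  · cases hs
  · obtain rfl : π.1 0 = s := by simpa [take_succ] using hs
    exact hsp

theorem Detects.and (ha : Detects h a A) (hc : Detects h c C) : Detects h (a.and c) (A ∩ C) :=
  fun π hπ => (ha π hπ.1).and (hc π hπ.2)

theorem Certifies.and (ha : Certifies h N a A) (hc : Certifies h N c C) :
    Certifies h N (a.and c) (A ∩ C) :=
  fun π n hn hs => ⟨ha π n hn hs.1, hc π n hn hs.2⟩

theorem Detects.or (ha : Detects h a A) (hc : Detects h c C) : Detects h (a.or c) (A ∪ C) :=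
  fun π hπ => hπ.elim (fun h => (ha π h).mono fun _ => .inl) fun h => (hc π h).mono fun _ => .inr

theorem Certifies.or (ha : Certifies h N a A) (hc : Certifies h N c C) :
    Certifies h N (a.or c) (A ∪ C) :=
  fun π n hn hs => hs.imp (ha π n hn) (hc π n hn)

theorem Detects.eventually_drop (ha : Detects h a A) {π : GenericPath R} {k : ℕ}
    (hπ : shift k π ∈ A) : ∀ᶠ n in atTop, a.Sat h ((take n π).drop k) := by
  simpa only [drop_take] using (tendsto_sub_atTop_nat k).eventually (ha _ hπ)

theorem Certifies.shift_mem (ha : Certifies h N a A) {π : GenericPath R} {n k : ℕ} (hn : n ≤ N)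
    (hs : a.Sat h ((take n π).drop k)) : shift k π ∈ A :=
  ha _ (n - k) (by omega) (drop_take k n π ▸ hs)

theorem Detects.next (ha : Detects h a A) : Detects h a.next (shift 1 ⁻¹' A) := fun π hπ => by
  simpa only [CoSafe.Sat, ← List.drop_one] using ha.eventually_drop hπ

theorem Certifies.next (ha : Certifies h N a A) : Certifies h N a.next (shift 1 ⁻¹' A) :=
  fun _ _ hn hs => ha.shift_mem hn (List.drop_one ▸ hs)

theorem Detects.untl (ha : Detects h a A) (hc : Detects h c C) :
    Detects h (a.untl c) (untilSet A C) := by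
  rintro π ⟨j, hj, hk⟩
  have hbefore : ∀ᶠ n in atTop, ∀ k ∈ Set.Iio j, a.Sat h ((take n π).drop k) :=
    (eventually_all_finite (Set.finite_Iio j)).2 fun k hkj => ha.eventually_drop (hk k hkj)
  filter_upwards [hc.eventually_drop hj, hbefore] with n hn hn'
  exact ⟨j, hn, hn'⟩

theorem Certifies.untl (ha : Certifies h N a A) (hc : Certifies h N c C) :
    Certifies h N (a.untl c) {π | ∃ j ≤ N, shift j π ∈ C ∧ ∀ k < j, shift k π ∈ A} := by
  rintro π n hn ⟨j, hj, hk⟩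
  refine ⟨j, ?_, hc.shift_mem hn hj, fun k hkj => ha.shift_mem hn (hk k hkj)⟩
  by_contra! hNj
  rw [List.drop_eq_nil_of_le (by rw [length_take]; omega)] at hj
  exact not_sat_nil h c hj

theorem Certifies.untilSet (ha : Certifies h N a A) (hc : Certifies h N c C) :
    Certifies h N (a.untl c) (untilSet A C) :=
  (ha.untl hc).mono fun _ ⟨j, _, hj⟩ => ⟨j, hj⟩

theorem Detects.hold {W : ℕ} (hW : ∀ l, h l ≤ W) (ha : Detects h a A) :
    Detects h a.hold {π | ∀ k ≤ W, shift k π ∈ A} := by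
  intro π hπ
  have hall : ∀ᶠ n in atTop, ∀ k ∈ Set.Iic W, a.Sat h ((take n π).drop k) :=
    (eventually_all_finite (Set.finite_Iic W)).2 fun k hk => ha.eventually_drop (hπ k hk)
  exact hall.mono fun n hn k hk => hn k (hk.trans (hW _))

theorem Certifies.hold {V : ℕ} (ha : Certifies (fun _ => V) N a A) :
    Certifies (fun _ => V) N a.hold {π | ∀ k ≤ V, shift k π ∈ A} :=
  fun _ _ hn hs k hk => ha.shift_mem hn (hs k hk)

/-- The formula `a R c`, where the letters of `p` discharge the obligation `c`. -/
def CoSafe.releaseBy (p : Set S) (a c : CoSafe S) : CoSafe S :=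
  c.untl ((lit p).or (a.and c))

theorem Detects.releaseBy {p : Set S} (hp : stable C ⊆ p) (ha : Detects h a A)
    (hc : Detects h c C) : Detects h (releaseBy p a c) (releaseSet A C) :=
  (hc.untl ((detects_lit p).or (ha.and hc))).mono <|
    untilSet_mono subset_rfl <| Set.union_subset_union_left _ fun _ hπ => hp hπ

theorem Certifies.releaseBy (ha : Certifies h N a A) (hc : Certifies h N c C) :
    Certifies h N (releaseBy (stable C) a c) (releaseSet A C) :=
  hc.untilSet ((certifies_lit _).or (ha.and hc))

end Certificates

section Translations

variable {AP Var : Type} {S : Type*}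

/-- A co-safety formula whose satisfaction by a short prefix of a path proves `w(φ)`. -/
def verifier (R : S → S → Prop) (L : S → Set AP) (w : Var → ℕ) : PD AP Var → CoSafe S
  | .atom a => lit {s | a ∈ L s}
  | .natom a => lit {s | a ∉ L s}
  | .and a c => (verifier R L w a).and (verifier R L w c)
  | .or a c => (verifier R L w a).or (verifier R L w c)
  | .next a => (verifier R L w a).next
  | .untl a c => (verifier R L w a).untl (verifier R L w c)
  | .release a c =>
    releaseBy (stable (truth R L w c)) (verifier R L w a) (verifier R L w c)
  | .always a => releaseBy (stable (truth R L w a)) (lit ∅) (verifier R L w a)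
  | .evVar _ a => (lit Set.univ).untl (verifier R L w a)

/-- A co-safety formula whose satisfaction by a prefix of a path disproves `v(φ)`. -/
def refuter (R : S → S → Prop) (L : S → Set AP) (v : Var → ℕ) : PD AP Var → CoSafe S
  | .atom a => lit {s | a ∉ L s}
  | .natom a => lit {s | a ∈ L s}
  | .and a c => (refuter R L v a).or (refuter R L v c)
  | .or a c => (refuter R L v a).and (refuter R L v c)
  | .next a => (refuter R L v a).next
  | .untl a c =>
    releaseBy (stable (truth R L v c)ᶜ) (refuter R L v a) (refuter R L v c)
  | .release a c => (refuter R L v a).untl (refuter R L v c)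
  | .always a => (lit Set.univ).untl (refuter R L v a)
  | .evVar _ a => (refuter R L v a).hold

theorem ncard_temporal_untl_le (a c : CoSafe S) :
    (a.untl c).temporal.ncard ≤ a.temporal.ncard + c.temporal.ncard + 1 :=
  (Set.ncard_insert_le _ _).trans (Nat.add_le_add_right (Set.ncard_union_le _ _) 1)

theorem ncard_temporal_releaseBy_le (p : Set S) (a c : CoSafe S) :
    (releaseBy p a c).temporal.ncard ≤ a.temporal.ncard + c.temporal.ncard + 1 := by
  have : c.temporal ∪ (∅ ∪ (a.temporal ∪ c.temporal)) = a.temporal ∪ c.temporal := by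
    rw [Set.empty_union, Set.union_left_comm, Set.union_self]
  exact (Set.ncard_insert_le _ _).trans <| Nat.add_le_add_right (this ▸ Set.ncard_union_le _ _) 1

variable {R : S → S → Prop} (L : S → Set AP)

theorem ncard_temporal_verifier_lt (w : Var → ℕ) (φ : PD AP Var) :
    (verifier R L w φ).temporal.ncard < φ.size := by
  induction φ with
  | atom a => simp [verifier, temporal, PD.size]
  | natom a => simp [verifier, temporal, PD.size]
  | and a c iha ihc | or a c iha ihc =>
    have := Set.ncard_union_le (verifier R L w a).temporal (verifier R L w c).temporal
    simp only [verifier, temporal, PD.size]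
    omega
  | next a iha =>
    have := Set.ncard_insert_le (verifier R L w a.next) (verifier R L w a).temporal
    simp only [verifier, temporal, PD.size] at this ⊢
    omega
  | untl a c iha ihc =>
    have := ncard_temporal_untl_le (verifier R L w a) (verifier R L w c)
    simp only [verifier, PD.size]
    omega
  | release a c iha ihc =>
    have := ncard_temporal_releaseBy_le (stable (truth R L w c))
      (verifier R L w a) (verifier R L w c)
    simp only [verifier, PD.size]
    omega
  | always a iha =>
    have := ncard_temporal_releaseBy_le (stable (truth R L w a))
      (lit ∅) (verifier R L w a)
    simp only [verifier, PD.size, temporal, Set.ncard_empty] at this ⊢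
    omega
  | evVar x a iha =>
    have := ncard_temporal_untl_le (lit Set.univ) (verifier R L w a)
    simp only [verifier, PD.size, temporal, Set.ncard_empty] at this ⊢
    omega

theorem ncard_temporal_refuter_lt (v : Var → ℕ) (φ : PD AP Var) :
    (refuter R L v φ).temporal.ncard < φ.size := by
  induction φ with
  | atom a => simp [refuter, temporal, PD.size]
  | natom a => simp [refuter, temporal, PD.size]
  | and a c iha ihc | or a c iha ihc =>
    have := Set.ncard_union_le (refuter R L v a).temporal (refuter R L v c).temporal
    simp only [refuter, temporal, PD.size]
    omega
  | next a iha =>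
    have := Set.ncard_insert_le (refuter R L v a.next) (refuter R L v a).temporal
    simp only [refuter, temporal, PD.size] at this ⊢
    omega
  | untl a c iha ihc =>
    have := ncard_temporal_releaseBy_le (stable (truth R L v c)ᶜ)
      (refuter R L v a) (refuter R L v c)
    simp only [refuter, PD.size]
    omega
  | release a c iha ihc =>
    have := ncard_temporal_untl_le (refuter R L v a) (refuter R L v c)
    simp only [refuter, PD.size]
    omega
  | always a iha =>
    have := ncard_temporal_untl_le (lit Set.univ) (refuter R L v a)
    simp only [refuter, PD.size, temporal, Set.ncard_empty] at this ⊢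
    omega
  | evVar x a iha =>
    have := Set.ncard_insert_le (refuter R L v a).hold (refuter R L v a).temporal
    simp only [refuter, temporal, PD.size]
    omega

variable [Finite S] [TopologicalSpace S] [DiscreteTopology S] {v w : Var → ℕ}

theorem detects_verifier (h : ℕ → ℕ) {n : ℕ}
    (hst : ∀ θ : PD AP Var, θ.size < n → stable (truth R L v θ) ⊆ stable (truth R L w θ))
    (φ : PD AP Var) (hφ : φ.size ≤ n) : Detects h (verifier R L w φ) (truth R L v φ) := by
  induction φ with simp only [PD.size] at hφ
  | atom a => exact detects_lit {s | a ∈ L s}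
  | natom a => exact detects_lit {s | a ∉ L s}
  | and a c iha ihc => exact (iha (by omega)).and (ihc (by omega))
  | or a c iha ihc => exact (iha (by omega)).or (ihc (by omega))
  | next a iha => exact truth_next R L v a ▸ (iha (by omega)).next
  | untl a c iha ihc => exact truth_untl R L v a c ▸ (iha (by omega)).untl (ihc (by omega))
  | release a c iha ihc =>
    exact truth_release R L v a c ▸
      (iha (by omega)).releaseBy (hst c (by omega)) (ihc (by omega))
  | always a iha =>
    exact truth_always R L v a ▸ (detects_lit ∅).releaseBy (hst a (by omega)) (iha (by omega))
  | evVar x a iha =>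
    rw [truth_evVar]
    exact ((detects_lit Set.univ).untl (iha (by omega))).mono
      fun π ⟨j, _, hj⟩ => ⟨j, hj, fun _ _ => trivial⟩

theorem certifies_verifier (h : ℕ → ℕ) {N : ℕ} (hN : ∀ x, N ≤ w x) (φ : PD AP Var) :
    Certifies h N (verifier R L w φ) (truth R L w φ) := by
  induction φ with
  | atom a => exact certifies_lit {s | a ∈ L s}
  | natom a => exact certifies_lit {s | a ∉ L s}
  | and a c iha ihc => exact iha.and ihc
  | or a c iha ihc => exact iha.or ihc
  | next a iha => exact truth_next R L w a ▸ iha.next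
  | untl a c iha ihc => exact truth_untl R L w a c ▸ iha.untilSet ihc
  | release a c iha ihc => exact truth_release R L w a c ▸ iha.releaseBy ihc
  | always a iha => exact truth_always R L w a ▸ (certifies_lit ∅).releaseBy iha
  | evVar x a iha =>
    rw [truth_evVar]
    exact ((certifies_lit Set.univ).untl iha).mono
      fun π ⟨j, hj, hπ, _⟩ => ⟨j, hj.trans (hN x), hπ⟩

theorem detects_refuter {h : ℕ → ℕ} {W n : ℕ} (hW : ∀ l, h l ≤ W) (hw : ∀ x, W ≤ w x)
    (hst : ∀ θ : PD AP Var, θ.size < n → stable (truth R L w θ)ᶜ ⊆ stable (truth R L v θ)ᶜ)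
    (φ : PD AP Var) (hφ : φ.size ≤ n) : Detects h (refuter R L v φ) (truth R L w φ)ᶜ := by
  induction φ with simp only [PD.size] at hφ
  | atom a => exact detects_lit {s | a ∉ L s}
  | natom a => exact (detects_lit {s | a ∈ L s}).mono fun _ => not_not.1
  | and a c iha ihc =>
    exact ((iha (by omega)).or (ihc (by omega))).mono fun _ => not_and_or.1
  | or a c iha ihc =>
    exact ((iha (by omega)).and (ihc (by omega))).mono fun _ => not_or.1
  | next a iha => exact truth_next R L w a ▸ (iha (by omega)).next
  | untl a c iha ihc =>
    exact compl_truth_untl R L w a c ▸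
      (iha (by omega)).releaseBy (hst c (by omega)) (ihc (by omega))
  | release a c iha ihc =>
    exact compl_truth_release R L w a c ▸ (iha (by omega)).untl (ihc (by omega))
  | always a iha =>
    rw [compl_truth_always]
    exact ((detects_lit Set.univ).untl (iha (by omega))).mono
      (untilSet_mono (fun _ _ => trivial) subset_rfl)
  | evVar x a iha =>
    rw [truth_evVar]
    exact ((iha (by omega)).hold hW).mono fun π hπ k hk hka => hπ ⟨k, hk.trans (hw x), hka⟩

theorem certifies_refuter (V N : ℕ) (φ : PD AP Var) :
    Certifies (fun _ => V) N (refuter R L (fun _ => V) φ) (truth R L (fun _ => V) φ)ᶜ := by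
  induction φ with
  | atom a => exact certifies_lit {s | a ∉ L s}
  | natom a => exact (certifies_lit {s | a ∈ L s}).mono fun _ => not_not.2
  | and a c iha ihc => exact (iha.or ihc).mono fun _ => not_and_or.2
  | or a c iha ihc => exact (iha.and ihc).mono fun _ => not_or.2
  | next a iha => exact truth_next R L (fun _ => V) a ▸ iha.next
  | untl a c iha ihc => exact compl_truth_untl R L (fun _ => V) a c ▸ iha.releaseBy ihc
  | release a c iha ihc => exact compl_truth_release R L (fun _ => V) a c ▸ iha.untilSet ihc
  | always a iha =>
    rw [compl_truth_always]
    exact ((certifies_lit Set.univ).untilSet iha).mono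
      (untilSet_mono (Set.subset_univ _) subset_rfl)
  | evVar x a iha =>
    rw [truth_evVar]
    exact iha.hold.mono fun π hπ ⟨k, hk, hka⟩ => hπ k hk hka

end Translations

section Transfer

variable {AP Var : Type} {S : Type*} {R : S → S → Prop}

theorem head?_take_of_sat {h : ℕ → ℕ} {χ : CoSafe S} {π : GenericPath R} {n : ℕ}
    (hs : χ.Sat h (take n π)) : (take n π).head? = some (π.1 0) := by
  rcases n with _ | n
  · exact (not_sat_nil h χ hs).elim
  · rw [take_succ, List.head?_cons]

theorem stable_subset_stable {A C : Set (GenericPath R)}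
    (h : ∀ π ∉ C, ∃ ρ ∉ A, ρ.1 0 = π.1 0) : stable A ⊆ stable C := by
  intro s hs ω hω
  by_contra hωC
  obtain ⟨ρ, hρA, hρ⟩ := h ω hωC
  exact hρA (hs ρ (hρ ▸ hω))

theorem two_mul_profileBound_le {ψ : CoSafe S} {n : ℕ} (h : ψ.temporal.ncard < n) :
    2 * profileBound ψ ≤ Nat.card S * 2 ^ n :=
  calc 2 * profileBound ψ = Nat.card S * 2 ^ (ψ.temporal.ncard + 1) := by
        rw [profileBound, pow_succ]; ring
    _ ≤ Nat.card S * 2 ^ n := Nat.mul_le_mul_left _ (Nat.pow_le_pow_right two_pos h)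

theorem blockWindow_succ_le (K l : ℕ) : blockWindow (K + 1) l ≤ 2 * K + 1 := by
  have := Nat.mod_lt (l - 1) (Nat.add_one_pos K)
  rw [blockWindow]
  omega

variable [Finite S] [TopologicalSpace S] [DiscreteTopology S] {L : S → Set AP}
  {v w : Var → ℕ} {V : ℕ} {φ : PD AP Var} {π : GenericPath R}

theorem exists_mem_truth_of_stable (hw : ∀ x, Nat.card S * 2 ^ φ.size ≤ w x)
    (hst : ∀ θ : PD AP Var, θ.size < φ.size → stable (truth R L v θ) ⊆ stable (truth R L w θ))
    (hπ : π ∈ truth R L v φ) : ∃ ρ ∈ truth R L w φ, ρ.1 0 = π.1 0 := by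
  obtain ⟨n, hn⟩ := (detects_verifier L 0 hst φ le_rfl π hπ).exists
  obtain ⟨_, ⟨ρ, k, rfl⟩, hhead, hsat, hlen⟩ := exists_short_prefix ⟨π, n, rfl⟩ hn
  rw [head?_take_of_sat hsat, head?_take_of_sat hn] at hhead
  have hk : k ≤ Nat.card S * 2 ^ φ.size := by
    have := two_mul_profileBound_le (ncard_temporal_verifier_lt (R := R) L w φ)
    rw [length_take] at hlen
    omega
  exact ⟨ρ, certifies_verifier L 0 hw φ ρ k hk hsat, Option.some.inj hhead⟩

theorem exists_notMem_truth_of_stable (hw : ∀ x, Nat.card S * 2 ^ φ.size < w x)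
    (hst : ∀ θ : PD AP Var, θ.size < φ.size →
      stable (truth R L w θ)ᶜ ⊆ stable (truth R L (fun _ => V) θ)ᶜ)
    (hπ : π ∉ truth R L w φ) : ∃ ρ ∉ truth R L (fun _ => V) φ, ρ.1 0 = π.1 0 := by
  set K := profileBound (refuter R L (fun _ => V) φ)
  have hK : ∀ x, 2 * K + 1 ≤ w x := fun x =>
    (two_mul_profileBound_le (ncard_temporal_refuter_lt L _ φ)).trans_lt (hw x)
  have hmul : Tendsto (fun β => (K + 1) * β) atTop atTop :=
    tendsto_atTop_mono (fun β => Nat.le_mul_of_pos_left β K.succ_pos) tendsto_id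
  obtain ⟨β, hβ⟩ := (hmul.eventually
    (detects_refuter L (blockWindow_succ_le K) hK hst φ le_rfl π hπ)).exists
  obtain ⟨_, ⟨ρ, k, rfl⟩, hhead, hsat⟩ :=
    exists_pumped_prefix K.lt_succ_self V ⟨π, _, rfl⟩ (length_take _ π) hβ
  rw [head?_take_of_sat hsat, head?_take_of_sat hβ] at hhead
  exact ⟨ρ, certifies_refuter L V k φ ρ k le_rfl hsat, Option.some.inj hhead⟩

theorem stable_truth_subset [Nonempty S] {n : ℕ} (hw : ∀ x, Nat.card S * 2 ^ n ≤ w x)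
    (θ : PD AP Var) (hθ : θ.size < n) :
    stable (truth R L (fun _ => V) θ) ⊆ stable (truth R L w θ) ∧
      stable (truth R L w θ)ᶜ ⊆ stable (truth R L (fun _ => V) θ)ᶜ := by
  induction hk : θ.size using Nat.strong_induction_on generalizing θ with
  | _ k ih =>
    have hlt : ∀ x, Nat.card S * 2 ^ θ.size < w x := fun x =>
      (Nat.mul_lt_mul_of_pos_left (Nat.pow_lt_pow_right one_lt_two hθ) Nat.card_pos).trans_le (hw x)
    have hsmall : ∀ θ' : PD AP Var, θ'.size < θ.size → _ := fun θ' hθ' =>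
      ih θ'.size (hk ▸ hθ') θ' (hθ'.trans hθ) rfl
    constructor
    · exact stable_subset_stable fun π hπ =>
        exists_notMem_truth_of_stable hlt (fun θ' hθ' => (hsmall θ' hθ').2) hπ
    · refine stable_subset_stable fun π hπ => ?_
      simp only [Set.notMem_compl_iff] at hπ ⊢
      exact exists_mem_truth_of_stable (fun x => (hlt x).le) (fun θ' hθ' => (hsmall θ' hθ').1) hπ

theorem exists_mem_truth (hw : ∀ x, Nat.card S * 2 ^ φ.size ≤ w x)
    (hπ : π ∈ truth R L (fun _ => V) φ) : ∃ ρ ∈ truth R L w φ, ρ.1 0 = π.1 0 :=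
  have : Nonempty S := ⟨π.1 0⟩
  exists_mem_truth_of_stable hw (fun θ hθ => (stable_truth_subset hw θ hθ).1) hπ

end Transfer

section Measure

variable {S : Type*}

/-- The sequences that agree with `u` up to and including time `n`. -/
def cylinder (n : ℕ) (u : ℕ → S) : Set (ℕ → S) := {π | ∀ k ≤ n, π k = u k}

theorem cylinder_congr {n : ℕ} {u u' : ℕ → S} (h : ∀ k ≤ n, u k = u' k) :
    cylinder n u = cylinder n u' :=
  Set.ext fun _ => forall₂_congr fun k hk => by rw [h k hk]

theorem cylinder_add_subset (n l : ℕ) (u : ℕ → S) : cylinder (n + l) u ⊆ cylinder n u :=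
  fun _ hπ k hk => hπ k (hk.trans (Nat.le_add_right n l))

theorem cylinder_subset_iUnion (n : ℕ) (u : ℕ → S) :
    cylinder n u ⊆ ⋃ s, cylinder (n + 1) (Function.update u (n + 1) s) := by
  intro π hπ
  refine Set.mem_iUnion.2 ⟨π (n + 1), fun k hk => ?_⟩
  rcases hk.eq_or_lt with rfl | hlt
  · rw [Function.update_self]
  · rw [Function.update_of_ne hlt.ne, hπ k (Nat.le_of_lt_succ hlt)]

theorem measure_eq_zero_of_cylinder [Finite S] [MeasurableSpace S] {μ : Measure (ℕ → S)}
    {X : Set (ℕ → S)} (n : ℕ) (h : ∀ u, μ (X ∩ cylinder n u) = 0) : μ X = 0 := by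
  let fiber (w : Fin (n + 1) → S) : Set (ℕ → S) := {π ∈ X | ∀ k : Fin (n + 1), π k = w k}
  have hcover : X ⊆ ⋃ w, fiber w := fun π hπ => Set.mem_iUnion.2 ⟨fun k => π k, hπ, fun _ => rfl⟩
  refine measure_mono_null hcover (measure_iUnion_null fun w => ?_)
  rcases (fiber w).eq_empty_or_nonempty with hempty | ⟨u, -, hu⟩
  · rw [hempty, measure_empty]
  · have hsub : fiber w ⊆ X ∩ cylinder n u := fun π hπ => ⟨hπ.1, fun k hk =>
      (hπ.2 ⟨k, Nat.lt_succ_of_le hk⟩).trans (hu ⟨k, Nat.lt_succ_of_le hk⟩).symm⟩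
    exact measure_mono_null hsub (h u)

/-- The measure `μ` is the law of the Markov chain with transition matrix `P` started at `s₀`. It
is specified on cylinders only, and cylinders are not assumed to be measurable. -/
structure IsMarkovLaw [Fintype S] [DecidableEq S] [MeasurableSpace S] (P : S → S → ℝ≥0∞) (s₀ : S)
    (μ : Measure (ℕ → S)) : Prop where
  sum_eq_one : ∀ s, ∑ t, P s t = 1
  measure_cylinder : ∀ n u, μ (cylinder n u) =
    (if u 0 = s₀ then 1 else 0) * ∏ k ∈ Finset.range n, P (u k) (u (k + 1))

/-- The transitions of positive probability. -/
def Transition (P : S → S → ℝ≥0∞) (s t : S) : Prop := 0 < P s t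

theorem exists_path_through {R : S → S → Prop} {u : ℕ → S} (hu : ∀ k, R (u k) (u (k + 1))) {s : S}
    (hs : ReflTransGen R s (u 0)) :
    ∃ (d : ℕ) (y : ℕ → S), y 0 = s ∧ (∀ k, R (y k) (y (k + 1))) ∧ ∀ k, y (k + d) = u k := by
  induction hs using ReflTransGen.head_induction_on with
  | refl => exact ⟨0, u, rfl, hu, fun _ => rfl⟩
  | @head s t hst _ ih =>
    obtain ⟨d, y, rfl, hy, hyu⟩ := ih
    exact ⟨d + 1, prepend s y, rfl, fun | 0 => hst | k + 1 => hy k, hyu⟩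

theorem exists_pos_le_prod [Finite S] {P : S → S → ℝ≥0∞} {u : ℕ → S}
    (hu : ∀ k, Transition P (u k) (u (k + 1))) (l : ℕ) :
    ∃ p > 0, ∀ s, ReflTransGen (Transition P) s (u 0) →
      ∃ (d : ℕ) (y : ℕ → S), y 0 = s ∧ (∀ k, y (k + d) = u k) ∧
        p ≤ ∏ k ∈ Finset.range (d + l), P (y k) (y (k + 1)) := by
  have hlocal : ∀ s, ∀ᶠ p in 𝓝[>] (0 : ℝ≥0∞), ReflTransGen (Transition P) s (u 0) →
      ∃ (d : ℕ) (y : ℕ → S), y 0 = s ∧ (∀ k, y (k + d) = u k) ∧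
        p ≤ ∏ k ∈ Finset.range (d + l), P (y k) (y (k + 1)) := by
    intro s
    by_cases hs : ReflTransGen (Transition P) s (u 0)
    · obtain ⟨d, y, hys, hy, hyu⟩ := exists_path_through hu hs
      have hpos : 0 < ∏ k ∈ Finset.range (d + l), P (y k) (y (k + 1)) :=
        CanonicallyOrderedAdd.prod_pos.2 fun k _ => hy k
      filter_upwards [nhdsWithin_le_nhds (eventually_le_nhds hpos)] with p hp _
      exact ⟨d, y, hys, hyu, hp⟩
    · exact .of_forall fun p h => (hs h).elim
  obtain ⟨p, hp, hp0⟩ := ((eventually_all.2 hlocal).and self_mem_nhdsWithin).exists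
  exact ⟨p, hp0, hp⟩

namespace IsMarkovLaw

variable [Fintype S] [DecidableEq S] [MeasurableSpace S] {P : S → S → ℝ≥0∞} {s₀ : S}
  {μ : Measure (ℕ → S)} (hμ : IsMarkovLaw P s₀ μ)
include hμ

theorem measure_cylinder_le_one (n : ℕ) (u : ℕ → S) : μ (cylinder n u) ≤ 1 := by
  calc μ (cylinder n u) ≤ μ (cylinder 0 u) := by
        simpa only [Nat.zero_add] using measure_mono (cylinder_add_subset 0 n u)
    _ ≤ 1 := by
        rw [hμ.measure_cylinder, Finset.prod_range_zero, mul_one]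
        split_ifs <;> simp

theorem measure_cylinder_lt_top (n : ℕ) (u : ℕ → S) : μ (cylinder n u) < ⊤ :=
  (hμ.measure_cylinder_le_one n u).trans_lt ENNReal.one_lt_top

theorem measure_cylinder_pos {n : ℕ} {u : ℕ → S} (h0 : u 0 = s₀)
    (hu : ∀ k, Transition P (u k) (u (k + 1))) : 0 < μ (cylinder n u) := by
  rw [hμ.measure_cylinder, if_pos h0, one_mul]
  exact CanonicallyOrderedAdd.prod_pos.2 fun k _ => hu k

theorem measure_cylinder_add (n l : ℕ) (u : ℕ → S) : μ (cylinder (n + l) u) =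
    μ (cylinder n u) * ∏ k ∈ Finset.range l, P (u (n + k)) (u (n + k + 1)) := by
  rw [hμ.measure_cylinder, hμ.measure_cylinder, Finset.prod_range_add, mul_assoc]

theorem sum_measure_cylinder_update (n : ℕ) (u : ℕ → S) :
    ∑ s, μ (cylinder (n + 1) (Function.update u (n + 1) s)) = μ (cylinder n u) := by
  have hterm : ∀ s, μ (cylinder (n + 1) (Function.update u (n + 1) s)) =
      μ (cylinder n u) * P (u n) s := fun s => by
    have hprefix : cylinder n (Function.update u (n + 1) s) = cylinder n u :=
      cylinder_congr fun k hk => Function.update_of_ne (by omega) _ _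
    rw [hμ.measure_cylinder_add, hprefix]
    simp
  simp_rw [hterm, ← Finset.mul_sum, hμ.sum_eq_one, mul_one]

theorem ae_start_and_step :
    ∀ᵐ π ∂μ, π 0 = s₀ ∧ ∀ k, Transition P (π k) (π (k + 1)) := by
  have hpos : ∀ᵐ π ∂μ, ∀ n, μ (cylinder n π) ≠ 0 := by
    refine ae_all_iff.2 fun n => measure_eq_zero_of_cylinder n fun u => ?_
    by_cases hu : μ (cylinder n u) = 0
    · exact measure_mono_null Set.inter_subset_right hu
    · have hdisj : Disjoint {π | μ (cylinder n π) ≠ 0}ᶜ (cylinder n u) := by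
        refine Set.disjoint_left.2 fun π hπ hπu => hπ ?_
        rwa [← cylinder_congr hπu] at hu
      exact (congrArg μ hdisj.inter_eq).trans measure_empty
  filter_upwards [hpos] with π hπ
  have hformula : ∀ n, (if π 0 = s₀ then (1 : ℝ≥0∞) else 0) *
      ∏ k ∈ Finset.range n, P (π k) (π (k + 1)) ≠ 0 := fun n => hμ.measure_cylinder n π ▸ hπ n
  refine ⟨by_contra fun h0 => hformula 0 (by simp [h0]), fun k => ?_⟩
  have hprod := pos_iff_ne_zero.2 (right_ne_zero_of_mul (hformula (k + 1)))
  exact CanonicallyOrderedAdd.prod_pos.1 hprod k (Finset.self_mem_range_succ k)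

-- `X` need not be measurable, so `cylinder n u` is split one letter at a time and only
-- subadditivity is used; the share of the branch that leads to `cylinder (n + l) u` is saved.
theorem measure_inter_cylinder_add_le {X : Set (ℕ → S)} {N : ℕ} {q : ℝ≥0∞}
    (hX : ∀ n ≥ N, ∀ u, μ (X ∩ cylinder n u) ≤ q * μ (cylinder n u)) (l : ℕ) {n : ℕ} (hn : N ≤ n)
    {u : ℕ → S} (hu : Disjoint X (cylinder (n + l) u)) :
    μ (X ∩ cylinder n u) + q * μ (cylinder (n + l) u) ≤ q * μ (cylinder n u) := by
  induction l generalizing n with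
  | zero => rw [Nat.add_zero] at hu ⊢; rw [hu.inter_eq, measure_empty, zero_add]
  | succ l ih =>
    rw [← Nat.succ_add_eq_add_succ] at hu ⊢
    let ext (s : S) : ℕ → S := Function.update u (n + 1) s
    let saved (s : S) : ℝ≥0∞ := if u (n + 1) = s then q * μ (cylinder (n + 1 + l) u) else 0
    have hext : ∀ s, μ (X ∩ cylinder (n + 1) (ext s)) + saved s ≤
        q * μ (cylinder (n + 1) (ext s)) := by
      intro s
      by_cases hs : u (n + 1) = s
      · have : ext s = u := by simp [ext, ← hs]
        simpa [saved, hs, this] using ih (hn.trans n.le_succ) hu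
      · simpa [saved, hs] using hX (n + 1) (hn.trans n.le_succ) (ext s)
    have hcover : X ∩ cylinder n u ⊆ ⋃ s, X ∩ cylinder (n + 1) (ext s) := by
      rw [← Set.inter_iUnion]
      exact Set.inter_subset_inter_right X (cylinder_subset_iUnion n u)
    calc μ (X ∩ cylinder n u) + q * μ (cylinder (n + 1 + l) u)
        ≤ ∑ s, μ (X ∩ cylinder (n + 1) (ext s)) + ∑ s, saved s := by
          gcongr
          · exact (measure_mono hcover).trans (measure_iUnion_fintype_le μ _)
          · simp [saved]
      _ = ∑ s, (μ (X ∩ cylinder (n + 1) (ext s)) + saved s) := Finset.sum_add_distrib.symm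
      _ ≤ ∑ s, q * μ (cylinder (n + 1) (ext s)) := Finset.sum_le_sum fun s _ => hext s
      _ = q * μ (cylinder n u) := by rw [← Finset.mul_sum, hμ.sum_measure_cylinder_update]

theorem measure_eq_zero_of_escape {X : Set (ℕ → S)} {N : ℕ} {p : ℝ≥0∞} (hp : 0 < p)
    (hescape : ∀ n ≥ N, ∀ u, (X ∩ cylinder n u).Nonempty → ∃ l u', (∀ k ≤ n, u' k = u k) ∧
      Disjoint X (cylinder (n + l) u') ∧ p * μ (cylinder n u) ≤ μ (cylinder (n + l) u')) :
    μ X = 0 := by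
  have hdecay : ∀ j, ∀ n ≥ N, ∀ u, μ (X ∩ cylinder n u) ≤ (1 - p) ^ j * μ (cylinder n u) := by
    intro j
    induction j with
    | zero => simpa using fun n _ u => measure_mono Set.inter_subset_right
    | succ j ih =>
      intro n hn u
      rcases (X ∩ cylinder n u).eq_empty_or_nonempty with hempty | hne
      · simp [hempty]
      obtain ⟨l, u', hu', hdisj, hpu⟩ := hescape n hn u hne
      have hsave := hμ.measure_inter_cylinder_add_le ih l hn hdisj
      rw [cylinder_congr hu'] at hsave
      have hpow : (1 - p) ^ j ≠ ⊤ := ENNReal.pow_ne_top (ENNReal.sub_ne_top ENNReal.one_ne_top)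
      have hfin : (1 - p) ^ j * (p * μ (cylinder n u)) ≠ ⊤ :=
        ENNReal.mul_ne_top hpow (hpu.trans_lt (hμ.measure_cylinder_lt_top _ _)).ne
      calc μ (X ∩ cylinder n u)
          ≤ (1 - p) ^ j * μ (cylinder n u) - (1 - p) ^ j * (p * μ (cylinder n u)) :=
            ENNReal.le_sub_of_add_le_right hfin ((add_le_add_right (by gcongr) _).trans hsave)
        _ = (1 - p) ^ (j + 1) * μ (cylinder n u) := by
            rw [← ENNReal.mul_sub fun _ _ => hpow, pow_succ, mul_assoc,
              ENNReal.sub_mul fun _ _ => (hμ.measure_cylinder_lt_top n u).ne, one_mul]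
  have hlimit : Tendsto (fun j => (1 - p) ^ j) atTop (𝓝 0) :=
    ENNReal.tendsto_pow_atTop_nhds_zero_of_lt_one
      (ENNReal.sub_lt_self ENNReal.one_ne_top one_ne_zero hp.ne')
  refine measure_eq_zero_of_cylinder N fun u => le_zero_iff.1 (ge_of_tendsto' hlimit fun j => ?_)
  exact (hdecay j N le_rfl u).trans (mul_le_of_le_one_right' (hμ.measure_cylinder_le_one N u))

theorem ae_frequently_of_path {u : ℕ → S} (hu : ∀ k, Transition P (u k) (u (k + 1))) (l : ℕ) :
    ∀ᵐ π ∂μ, (∀ n, ReflTransGen (Transition P) (π n) (u 0)) →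
      ∃ᶠ i in atTop, ∀ k ≤ l, π (k + i) = u k := by
  obtain ⟨p, hp, hpath⟩ := exists_pos_le_prod hu l
  simp only [frequently_atTop]
  suffices hN : ∀ N, μ {π | (∀ n, ReflTransGen (Transition P) (π n) (u 0)) ∧
      ∀ i ≥ N, ¬∀ k ≤ l, π (k + i) = u k} = 0 by
    filter_upwards [ae_all_iff.2 fun N => measure_eq_zero_iff_ae_notMem.1 (hN N)] with π hπ hreach N
    by_contra! hnone
    exact hπ N ⟨hreach, fun i hi h => by obtain ⟨k, hk, hne⟩ := hnone i hi; exact hne (h k hk)⟩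
  refine fun N => hμ.measure_eq_zero_of_escape (N := N) hp fun n hn x ⟨π, hπ, hπx⟩ => ?_
  obtain ⟨d, y, hy0, hyu, hprod⟩ := hpath (x n) (hπx n le_rfl ▸ hπ.1 n)
  let x' : ℕ → S := fun k => if k ≤ n then x k else y (k - n)
  have hx'x : ∀ k ≤ n, x' k = x k := fun k hk => if_pos hk
  have hx'y : ∀ k, x' (n + k) = y k := by
    rintro (_ | k)
    · simp [x', hy0]
    · simp [x']
  refine ⟨d + l, x', hx'x, Set.disjoint_left.2 fun ω hω hωx' => ?_, ?_⟩
  · refine hω.2 (n + d) (by omega) fun k hk => ?_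
    rw [hωx' _ (by omega), ← hyu k, ← hx'y (k + d)]
    congr 1
    omega
  · rw [hμ.measure_cylinder_add, cylinder_congr hx'x, mul_comm]
    simpa only [add_assoc, hx'y] using mul_le_mul_right hprod (μ (cylinder n x))

theorem ae_frequently (l : ℕ) :
    ∀ᵐ π ∂μ, ∀ u : ℕ → S, (∀ k, Transition P (u k) (u (k + 1))) →
      (∀ n, ReflTransGen (Transition P) (π n) (u 0)) →
        ∃ᶠ i in atTop, ∀ k ≤ l, π (k + i) = u k := by
  suffices hword : ∀ w : Fin (l + 1) → S, ∀ᵐ π ∂μ, ∀ u : ℕ → S,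
      (∀ k : Fin (l + 1), u k = w k) → (∀ k, Transition P (u k) (u (k + 1))) →
        (∀ n, ReflTransGen (Transition P) (π n) (u 0)) →
          ∃ᶠ i in atTop, ∀ k ≤ l, π (k + i) = u k by
    filter_upwards [ae_all_iff.2 hword] with π hπ u
    exact hπ (fun k => u k) u fun _ => rfl
  intro w
  by_cases hw : ∃ u : ℕ → S, (∀ k : Fin (l + 1), u k = w k) ∧ ∀ k, Transition P (u k) (u (k + 1))
  · obtain ⟨u₀, hu₀w, hu₀⟩ := hw
    filter_upwards [hμ.ae_frequently_of_path hu₀ l] with π hπ u huw _ hreach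
    have heq : ∀ k ≤ l, u k = u₀ k := fun k hk =>
      (huw ⟨k, Nat.lt_succ_of_le hk⟩).trans (hu₀w ⟨k, Nat.lt_succ_of_le hk⟩).symm
    exact (hπ (heq 0 l.zero_le ▸ hreach)).mono fun i hi k hk => (hi k hk).trans (heq k hk).symm
  · exact .of_forall fun π u huw hu => (hw ⟨u, huw, hu⟩).elim

theorem ae_isGeneric : ∀ᵐ π ∂μ, π 0 = s₀ ∧ IsGeneric (Transition P) π := by
  filter_upwards [hμ.ae_start_and_step, ae_all_iff.2 hμ.ae_frequently] with π hπ hfreq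
  exact ⟨hπ.1, hπ.2, fun u hu hreach l => hfreq l u hu hreach⟩

theorem measure_sat_pos {AP Var : Type} (L : S → Set AP) {φ : PD AP Var} {v w : Var → ℕ}
    (hw : ∀ x, Fintype.card S * 2 ^ φ.size ≤ w x)
    (hv : 0 < μ {π | PD.Sat (fun i => L (π i)) 0 v φ}) :
    0 < μ {π | PD.Sat (fun i => L (π i)) 0 w φ} := by
  let _ : TopologicalSpace S := ⊥
  have _ : DiscreteTopology S := ⟨rfl⟩
  obtain ⟨π, hsat, hπ0, hπ⟩ := ((frequently_ae_iff.2 hv.ne').and_eventually hμ.ae_isGeneric).exists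
  obtain ⟨V, hV⟩ := (eventually_sat_const v φ).exists
  obtain ⟨ρ, hρ, hρ0⟩ := exists_mem_truth (R := Transition P) (L := L) (V := V) (π := ⟨π, hπ⟩)
    (by simpa only [Nat.card_eq_fintype_card] using hw) (hV _ _ hsat)
  obtain ⟨n, hn⟩ := exists_cylinder_subset (isClopen_truth (Transition P) L w φ).isOpen hρ
  have hpos : 0 < μ (cylinder n ρ.1) := hμ.measure_cylinder_pos (hρ0.trans hπ0) ρ.2.step
  refine hpos.trans_le (measure_mono_ae ?_)
  filter_upwards [hμ.ae_isGeneric] with ω hω hωρ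
  exact hn ⟨ω, hω.2⟩ hωρ

end IsMarkovLaw

end Measure

end PLTL

theorem PD_Vpos_nonempty_iff_bound_general {AP Var : Type} {S : Type*} [Fintype S] [DecidableEq S]
    [MeasurableSpace S] {P : S → S → ℝ≥0∞} {s₀ : S} (L : S → Set AP) {μ : Measure (ℕ → S)}
    (hμ : PLTL.IsMarkovLaw P s₀ μ) (φ : PD AP Var) {w : Var → ℕ}
    (hw : ∀ x, Fintype.card S * 2 ^ φ.size ≤ w x) :
    (∃ v, 0 < μ {π | PD.Sat (fun i => L (π i)) 0 v φ}) ↔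
      0 < μ {π | PD.Sat (fun i => L (π i)) 0 w φ} :=
  ⟨fun ⟨_, hv⟩ => hμ.measure_sat_pos L hw hv, fun h => ⟨w, h⟩⟩

/-- For a pLTL_◇ formula `φ` in which each parameter variable occurs at most once and a
finite Markov chain `M` with `m` states: `V_{>0}(φ) ≠ ∅` iff `v̄ ∈ V_{>0}(φ)`, where
`v̄(x) = m·|φ|·2^{|φ|}` for every variable `x`. -/
theorem PD_Vpos_nonempty_iff_bound
    {AP Var S : Type} [DecidableEq Var] [Fintype S] [DecidableEq S] [MeasurableSpace S]
    (P : S → S → ℝ≥0∞) (hP : ∀ s, ∑ t, P s t = 1)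
    (s₀ : S) (L : S → Set AP)
    (μ : Measure (ℕ → S)) (hprob : IsProbabilityMeasure μ)
    (hcyl : ∀ (n : ℕ) (u : ℕ → S),
      μ {π | ∀ k ≤ n, π k = u k} =
        (if u 0 = s₀ then 1 else 0) * ∏ k ∈ Finset.range n, P (u k) (u (k + 1)))
    (φ : PD AP Var) (hvar : ∀ x : Var, PD.varCount x φ ≤ 1)
    (V : Set (Var → ℕ))
    (hV : V = {v | 0 < μ {π | PD.Sat (fun i => L (π i)) 0 v φ}}) :
    V.Nonempty ↔ (fun _ : Var => Fintype.card S * φ.size * 2 ^ φ.size) ∈ V := by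
  subst hV
  exact PD_Vpos_nonempty_iff_bound_general L ⟨hP, hcyl⟩ φ fun _ =>
    Nat.mul_le_mul_right _ (Nat.le_mul_of_pos_right _ (PLTL.size_pos φ))
end

section
/- For every pLTL_◇ formula φ in which each parameter variable occurs at most once and every finite Markov chain M with m states: V_{=1}(φ) ≠ ∅ if and only if v̄ ∈ V_{=1}(φ), where v̄ is the valuation assigning v̄(x) = m·|φ|·2^{|φ|} to every parameter variable x of φ. -/
open MeasureTheory
open scoped ENNReal

/-!
Raising the parameters to a common value `N` preserves satisfaction, so there is only one bound to
vary. Only its size relative to the number of states times the number of sets of certificates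
matters: a word that satisfies `φ` with positive probability under some bound is contracted, by
jumping from each label (state, certificates that hold there) to its last occurrence, until every
eventuality is fulfilled early. Probability one is dual: negation turns each bounded eventuality
into a bounded `□`, and a word refuting `φ` under a small bound is lengthened to refute it under a
large one, by running around loops in which no pending `□` expires.

Contraction and pumping act on finite prefixes, whereas a release may have to hold forever. A path
on which it does almost surely reaches a state from which almost every path satisfies it (a 0-1
law), and the certificates refer to that state instead of the infinite future. The assertion on
such states is in turn one about probability one and formulas of smaller size, so the two cases are
proved by a simultaneous induction.
-/

/-- The until modality on predicates of time: `q` holds at some time from `i` on, and `p` holds at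
every time in between. Times from `i` on are written `k + i`, so that satisfaction on a shifted
word unfolds to an identity of indices. -/
def Until (p q : ℕ → Prop) (i : ℕ) : Prop :=
  ∃ j, q (j + i) ∧ ∀ k < j, p (k + i)

section Until

variable {p q p' q' : ℕ → Prop} {i H : ℕ}

theorem until_iff : Until p q i ↔ q i ∨ p i ∧ Until p q (i + 1) := by
  constructor
  · rintro ⟨_ | j, hq, hp⟩
    · exact .inl (by simpa using hq)
    · refine .inr ⟨by simpa using hp 0 j.succ_pos, j, by rwa [add_right_comm] at hq, fun k hk => ?_⟩
      simpa only [add_assoc, add_comm 1 i] using hp (k + 1) (by omega)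
  · rintro (hq | ⟨hp, j, hq, hj⟩)
    · exact ⟨0, by simpa using hq, by simp⟩
    · refine ⟨j + 1, by rwa [add_right_comm], ?_⟩
      rintro (_ | k) hk
      · simpa using hp
      · rw [add_right_comm]
        exact hj k (by omega)

theorem Until.of_right (hq : q i) : Until p q i :=
  until_iff.2 (.inl hq)

theorem Until.mono (hp : ∀ k, p k → p' k) (hq : ∀ k, q k → q' k) (h : Until p q i) :
    Until p' q' i :=
  let ⟨j, hj, hk⟩ := h
  ⟨j, hq _ hj, fun k hkj => hp _ (hk k hkj)⟩

theorem Until.trans (h : Until p (Until p q) i) : Until p q i := by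
  obtain ⟨j, h, hp⟩ := h
  induction j generalizing i with
  | zero => simpa using h
  | succ j ih =>
    refine until_iff.2 (.inr ⟨by simpa using hp 0 j.succ_pos, ih (by rwa [add_right_comm] at h) ?_⟩)
    intro k hk
    simpa only [add_assoc, add_comm 1 i] using hp (k + 1) (by omega)

theorem Until.le (h : Until p q i) (hq : ∀ k, q k → k ≤ H) : i ≤ H :=
  let ⟨j, hj, _⟩ := h
  (Nat.le_add_left i j).trans (hq _ hj)

theorem Until.eventually {ι : Type*} {l : Filter ι} {p' q' : ι → ℕ → Prop} (h : Until p q i)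
    (hp : ∀ k, p k → ∀ᶠ H in l, p' H k) (hq : ∀ k, q k → ∀ᶠ H in l, q' H k) :
    ∀ᶠ H in l, Until (p' H) (q' H) i := by
  obtain ⟨j, hj, hk⟩ := h
  filter_upwards [hq _ hj, (Filter.eventually_all_finite (Set.finite_lt_nat j)).2
    fun k hkj => hp _ (hk k hkj)] with H hqH hpH
  exact ⟨j, hqH, hpH⟩

theorem release_iff_until : (∀ j, q (j + i) ∨ ∃ k < j, p (k + i)) ↔
    Until q (fun j => (∀ l, q (l + j)) ∨ p j ∧ q j) i := by
  classical
  constructor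
  · intro h
    by_cases hp : ∃ k, p (k + i)
    · have hq : ∀ j ≤ Nat.find hp, q (j + i) := fun j hj =>
        (h j).resolve_right fun ⟨k, hk, hpk⟩ => Nat.find_min hp (hk.trans_le hj) hpk
      exact ⟨Nat.find hp, .inr ⟨Nat.find_spec hp, hq _ le_rfl⟩, fun k hk => hq k hk.le⟩
    · exact .of_right (.inl fun j => (h j).resolve_right fun ⟨k, _, hk⟩ => hp ⟨k, hk⟩)
  · rintro ⟨l, hl, hq⟩ j
    rcases lt_trichotomy j l with hjl | rfl | hlj
    · exact .inl (hq j hjl)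
    · exact .inl (hl.elim (fun h => by simpa using h 0) And.right)
    · rcases hl with hl | hl
      · left
        simpa [← add_assoc, Nat.sub_add_cancel hlj.le] using hl (j - l)
      · exact .inr ⟨l, hlj, hl.1⟩

end Until

theorem exists_lt_map_eq_of_card_lt {ι Λ : Type*} [LinearOrder ι] [Fintype ι] [Fintype Λ]
    (g : ι → Λ) (h : Fintype.card Λ < Fintype.card ι) : ∃ i j, i < j ∧ g i = g j := by
  obtain ⟨i, j, hne, heq⟩ := Fintype.exists_ne_map_eq_of_card_lt g h
  rcases hne.lt_or_gt with hlt | hlt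
  exacts [⟨i, j, hlt, heq⟩, ⟨j, i, hlt, heq.symm⟩]

/-- The position a walk `f` on `ℕ` would occupy at time `k` had it just advanced by one. Below, a
word is replayed along `f` when its labels at `f k` and `expected f k` always agree. -/
def expected (f : ℕ → ℕ) : ℕ → ℕ
  | 0 => 0
  | k + 1 => f k + 1

section Contraction

variable {Λ : Type*}

open Classical in
/-- The last position up to `H` carrying the same label as position `i`, or `i` itself if `i` lies
beyond `H`. -/
noncomputable def lastOccurrence (lab : ℕ → Λ) (H i : ℕ) : ℕ :=
  max i (Nat.findGreatest (fun j => lab j = lab i) H)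

variable {lab : ℕ → Λ} {H i j : ℕ}

theorem le_lastOccurrence : i ≤ lastOccurrence lab H i :=
  le_max_left _ _

theorem le_lastOccurrence_of_eq (hj : j ≤ H) (h : lab j = lab i) : j ≤ lastOccurrence lab H i := by
  classical
  exact (Nat.le_findGreatest hj h).trans (le_max_right _ _)

theorem lastOccurrence_le (hi : i ≤ H) : lastOccurrence lab H i ≤ H := by
  classical
  exact max_le hi (Nat.findGreatest_le H)

theorem lab_lastOccurrence : lab (lastOccurrence lab H i) = lab i := by
  classical
  rcases max_choice i (Nat.findGreatest (fun j => lab j = lab i) H) with h | h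
  · rw [lastOccurrence, h]
  · rw [lastOccurrence, h]
    by_cases hi : i ≤ H
    · exact Nat.findGreatest_spec (P := fun j => lab j = lab i) hi rfl
    · have := Nat.findGreatest_le (P := fun j => lab j = lab i) H
      omega

theorem exists_contraction [Fintype Λ] (lab : ℕ → Λ) (H : ℕ) :
    ∃ f : ℕ → ℕ, (∀ k, lab (f k) = lab (expected f k)) ∧ (∀ k, expected f k ≤ H → f k ≤ H) ∧
      ∀ k, Fintype.card Λ ≤ k → H < f k := by
  let f : ℕ → ℕ :=
    Nat.rec (lastOccurrence lab H 0) fun _ x => lastOccurrence lab H (x + 1)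
  have hf : ∀ k, f k = lastOccurrence lab H (expected f k) := by
    rintro (_ | k) <;> rfl
  have hmono : StrictMono f := strictMono_nat_of_lt_succ fun k => le_lastOccurrence
  have hlab : ∀ k, lab (f k) = lab (expected f k) := fun k => by
    rw [hf]; exact lab_lastOccurrence
  refine ⟨f, hlab, fun k hk => hf k ▸ lastOccurrence_le hk, fun k hk => ?_⟩
  by_contra hkH
  rw [not_lt] at hkH
  obtain ⟨i, j, hij, heq⟩ := exists_lt_map_eq_of_card_lt
    (fun i : Fin (Fintype.card Λ + 1) => lab (f i)) (by simp)
  have hjH : f j ≤ H := (hmono.monotone (by omega)).trans hkH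
  have hji : f j ≤ f i := by
    rw [hf i]
    exact le_lastOccurrence_of_eq hjH (by rw [← hlab, heq])
  exact (hmono hij).not_ge hji

end Contraction

section Pumping

variable {κ Λ : Type*} {O : ℕ → κ → Prop} {B d e e' : ℕ} {c : κ}

/-- Every obligation `O i c` raises the flag `c` at the times `i, …, i + B`; the flag `c` is up at
time `k`. -/
def Pending (O : ℕ → κ → Prop) (B k : ℕ) (c : κ) : Prop :=
  ∃ i ≤ k, k ≤ i + B ∧ O i c

/-- The flag `c` goes down right after time `e`. -/
def Expires (O : ℕ → κ → Prop) (B e : ℕ) (c : κ) : Prop :=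
  Pending O B e c ∧ ¬Pending O B (e + 1) c

theorem Expires.add_le (h : Expires O B e c) (hd : d ≤ e) (hO : O d c) : d + B ≤ e := by
  by_contra! hlt
  exact h.2 ⟨d, by omega, hlt, hO⟩

theorem Expires.add_lt (h : Expires O B e c) (h' : Expires O B e' c) (hlt : e < e') :
    e + B < e' := by
  obtain ⟨d, hd, hde, hO⟩ := h'.1
  have := h'.add_le hd hO
  by_contra! hle
  exact h.2 ⟨d, by omega, by omega, hO⟩

/-- Among `card κ + 1` consecutive blocks of `card Λ` steps, some block sees no flag go down, since
each flag needs `B` steps between two expirations; inside it some label repeats. -/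
theorem exists_loop [Fintype κ] [Fintype Λ] (O : ℕ → κ → Prop) (lab : ℕ → Λ)
    (hB : (Fintype.card κ + 1) * Fintype.card Λ ≤ B) (p : ℕ) :
    ∃ a b, p ≤ a ∧ a < b ∧ b ≤ p + (Fintype.card κ + 1) * Fintype.card Λ ∧ lab a = lab b ∧
      ∀ e, a ≤ e → e < b → ∀ c, ¬Expires O B e c := by
  set C := Fintype.card Λ
  obtain ⟨i, hiκ, hi⟩ : ∃ i ≤ Fintype.card κ,
      ∀ e, p + i * C ≤ e → e < p + (i + 1) * C → ∀ c, ¬Expires O B e c := by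
    by_contra! hno
    choose! e hle hlt c hexp using hno
    obtain ⟨i, j, hij, heq⟩ := exists_lt_map_eq_of_card_lt
      (fun i : Fin (Fintype.card κ + 1) => c i (by omega)) (by simp)
    have hi := hexp i (by omega)
    have hj := hexp j (by omega)
    have hmul : (i + 1 : ℕ) * C ≤ j * C := Nat.mul_le_mul_right _ hij
    have hmul' : (j + 1 : ℕ) * C ≤ (Fintype.card κ + 1) * C := Nat.mul_le_mul_right _ j.2
    have := hlt i (by omega)
    have := hle i (by omega)
    have := hle j (by omega)
    have := hlt j (by omega)
    have := hi.add_lt (heq ▸ hj) (by omega)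
    omega
  obtain ⟨x, y, hxy, heq⟩ := exists_lt_map_eq_of_card_lt
    (fun x : Fin (C + 1) => lab (p + i * C + x)) (by simp [C])
  have hmul : (i + 1) * C ≤ (Fintype.card κ + 1) * C := Nat.mul_le_mul_right _ (by omega)
  have hsucc : (i + 1) * C = i * C + C := Nat.succ_mul i C
  refine ⟨p + i * C + x, p + i * C + y, by omega, by omega, by omega, heq, ?_⟩
  exact fun e hae heb => hi e (by omega) (by omega)

/-- A walker on `ℕ` at position `pos` that heads for the end of the loop chosen for `base` and has
still to run `laps` times around that loop. -/
structure Walker where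
  pos : ℕ
  laps : ℕ
  base : ℕ

namespace Walker

/-- One step forward, or from the end `b p` of the loop `[a p, b p)` back to its start; once all
laps are run, `b p` becomes the new base, with `N` new laps. -/
def step (a b : ℕ → ℕ) (N : ℕ) (w : Walker) : Walker :=
  if w.pos + 1 = b w.base then
    if w.laps = 0 then ⟨b w.base, N, b w.base⟩ else ⟨a w.base, w.laps - 1, w.base⟩
  else ⟨w.pos + 1, w.laps, w.base⟩

/-- The walker has not left the segment `[base, b base)`. -/
def Valid (b : ℕ → ℕ) (w : Walker) : Prop :=
  w.base ≤ w.pos ∧ w.pos < b w.base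

variable {a b : ℕ → ℕ} {N q : ℕ} {w : Walker}

theorem step_cases (a b : ℕ → ℕ) (N : ℕ) (w : Walker) :
    w.pos + 1 ≠ b w.base ∧ w.step a b N = ⟨w.pos + 1, w.laps, w.base⟩ ∨
      w.pos + 1 = b w.base ∧ w.laps ≠ 0 ∧ w.step a b N = ⟨a w.base, w.laps - 1, w.base⟩ ∨
      w.pos + 1 = b w.base ∧ w.step a b N = ⟨w.pos + 1, N, w.pos + 1⟩ := by
  unfold step
  split_ifs with h h0
  exacts [.inr (.inr ⟨h, by rw [h]⟩), .inr (.inl ⟨h, h0, rfl⟩), .inl ⟨h, rfl⟩]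

theorem lab_step_pos {lab : ℕ → Λ} (hlab : ∀ p, lab (a p) = lab (b p)) :
    lab (w.step a b N).pos = lab (w.pos + 1) := by
  rcases step_cases a b N w with ⟨_, h⟩ | ⟨hb, _, h⟩ | ⟨_, h⟩ <;> rw [h]
  exact (hlab _).trans (hb ▸ rfl)

theorem Valid.base_le_step_base (h : w.Valid b) : w.base ≤ (w.step a b N).base := by
  rcases step_cases a b N w with ⟨_, hs⟩ | ⟨_, _, hs⟩ | ⟨_, hs⟩ <;> rw [hs]
  exact h.1.trans (Nat.le_succ _)

theorem iterate_step_base (w : Walker) {j : ℕ} (hj : j ≤ N) :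
    ((step a b N)^[j] w).base = w.base ∨
      ((step a b N)^[j] w).base = b w.base ∧ N ≤ ((step a b N)^[j] w).laps + j := by
  induction j with
  | zero => exact .inl rfl
  | succ j ih =>
    rw [Function.iterate_succ_apply']
    generalize (step a b N)^[j] w = v at ih ⊢
    unfold step
    rcases ih (by omega) with ih | ⟨ih, hN⟩ <;> split_ifs <;> simp_all <;> omega

section Loops

variable (hpa : ∀ p, p ≤ a p) (hab : ∀ p, a p < b p)

include hab in
theorem step_pos_le : (w.step a b N).pos ≤ w.pos + 1 := by
  rcases step_cases a b N w with ⟨_, h⟩ | ⟨hb, _, h⟩ | ⟨_, h⟩ <;> rw [h]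
  exact hb ▸ (hab _).le

include hpa hab

theorem Valid.step (h : w.Valid b) : (w.step a b N).Valid b := by
  have hbase := h.1
  have hpos := h.2
  rcases step_cases a b N w with ⟨hne, hs⟩ | ⟨_, _, hs⟩ | ⟨_, hs⟩ <;> rw [hs]
  · exact ⟨by dsimp only; omega, by dsimp only; omega⟩
  · exact ⟨hpa _, hab _⟩
  · exact ⟨le_rfl, (hpa _).trans_lt (hab _)⟩

theorem Valid.iterate_step (h : w.Valid b) (j : ℕ) : ((Walker.step a b N)^[j] w).Valid b :=
  Function.Iterate.rec _ h (fun _ hv => hv.step hpa hab) j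

theorem Valid.iterate_step_pos_lt {W : ℕ} (hW : ∀ p, b p ≤ p + W) (h : w.Valid b) {j : ℕ}
    (hj : j ≤ N) : ((Walker.step a b N)^[j] w).pos < w.pos + 2 * W := by
  have hlt := (h.iterate_step hpa hab (N := N) j).2
  have hle := h.1
  have := hW w.base
  have := hW (b w.base)
  rcases iterate_step_base (a := a) (b := b) w hj with hb | ⟨hb, -⟩ <;> rw [hb] at hlt <;> omega

theorem Valid.exists_base_lt (h : w.Valid b) :
    ∃ j, w.base < ((Walker.step a b N)^[j] w).base := by
  induction hm : w.laps * b w.base + (b w.base - w.pos) using Nat.strong_induction_on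
    generalizing w with
  | _ m ih =>
    have hlt := h.2
    have hle := h.1
    suffices hs : w.base < (w.step a b N).base ∨ (w.step a b N).base = w.base ∧
        (w.step a b N).laps * b w.base + (b w.base - (w.step a b N).pos) < m by
      rcases hs with hs | ⟨hbase, hs⟩
      · exact ⟨1, hs⟩
      · obtain ⟨j, hj⟩ := ih _ hs (h.step hpa hab) (by rw [hbase])
        exact ⟨j + 1, by rwa [hbase] at hj⟩
    rcases step_cases a b N w with ⟨hne, hs⟩ | ⟨_, hr, hs⟩ | ⟨_, hs⟩ <;>
      simp only [hs, lt_self_iff_false, true_and, false_or]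
    · omega
    · obtain ⟨r, hr⟩ := Nat.exists_eq_succ_of_ne_zero hr
      rw [← hm, hr, Nat.succ_sub_one, Nat.succ_mul]
      have := hab w.base
      omega
    · omega

theorem tendsto_iterate_step_pos (h : w.Valid b) :
    Filter.Tendsto (fun k => ((Walker.step a b N)^[k] w).pos) Filter.atTop Filter.atTop := by
  have hmono : Monotone fun k => ((Walker.step a b N)^[k] w).base :=
    monotone_nat_of_le_succ fun k => by
      rw [Function.iterate_succ_apply']
      exact (h.iterate_step hpa hab k).base_le_step_base
  refine Filter.tendsto_atTop_mono (fun k => (h.iterate_step hpa hab k).1)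
    (Filter.tendsto_atTop_atTop_of_monotone hmono fun M => ?_)
  induction M with
  | zero => exact ⟨0, Nat.zero_le _⟩
  | succ M ih =>
    obtain ⟨k, hk⟩ := ih
    obtain ⟨j, hj⟩ := (h.iterate_step hpa hab (N := N) k).exists_base_lt hpa hab (N := N)
    exact ⟨j + k, by rw [Function.iterate_add_apply]; omega⟩

end Loops

/-- Having been at `q`, the walker is below `q` only inside a loop. -/
def Above (a b : ℕ → ℕ) (q : ℕ) (w : Walker) : Prop :=
  q ≤ b w.base ∧ (w.pos < q → a w.base ≤ w.pos)

theorem Valid.above (h : w.Valid b) : w.Above a b w.pos :=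
  ⟨h.2.le, fun hlt => (lt_irrefl _ hlt).elim⟩

section Above

variable (hpa : ∀ p, p ≤ a p) (hab : ∀ p, a p < b p)
include hpa hab

theorem Valid.above_step (h : w.Valid b) : (w.step a b N).Above a b (w.pos + 1) := by
  have hb : w.pos + 1 ≤ b (w.pos + 1) := ((hpa _).trans_lt (hab _)).le
  rcases step_cases a b N w with ⟨_, hs⟩ | ⟨_, _, hs⟩ | ⟨_, hs⟩ <;> rw [hs]
  exacts [⟨h.2, fun hlt => (lt_irrefl _ hlt).elim⟩, ⟨h.2, fun _ => le_rfl⟩,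
    ⟨hb, fun hlt => (lt_irrefl _ hlt).elim⟩]

theorem Above.step (h : w.Above a b q) : (w.step a b N).Above a b q := by
  rcases step_cases a b N w with ⟨_, hs⟩ | ⟨_, _, hs⟩ | ⟨hb, hs⟩ <;> rw [hs]
  · exact ⟨h.1, fun hlt => (h.2 ((Nat.lt_succ_self _).trans hlt)).trans (Nat.le_succ _)⟩
  · exact ⟨h.1, fun _ => le_rfl⟩
  · have hq : q ≤ w.pos + 1 := hb ▸ h.1
    exact ⟨hq.trans ((hpa _).trans_lt (hab _)).le, fun hlt => (hlt.not_ge hq).elim⟩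

end Above

/-- A flag that has gone up can go down again neither above `q`, where the walker has no time to
get, nor below `q`, where it stays inside loops. -/
theorem Above.pending_step {lab : ℕ → Λ} {v : Walker} (hv : v.Valid b)
    (hq : v.Above a b q) (hlt : v.pos < q + B)
    (hlab : ∀ x y, lab x = lab y → (Pending O B x c ↔ Pending O B y c))
    (hloop : ∀ p, lab (a p) = lab (b p))
    (hend : ∀ p e, a p ≤ e → e < b p → ¬Expires O B e c)
    (hO : O q c) (h : Pending O B v.pos c) : Pending O B (v.step a b N).pos c := by
  rw [hlab _ _ (lab_step_pos hloop)]
  by_contra hnot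
  have hexp : Expires O B v.pos c := ⟨h, hnot⟩
  rcases le_or_gt q v.pos with hqv | hvq
  · exact hlt.not_ge (hexp.add_le hqv hO)
  · exact hend _ _ (hq.2 hvq) hv.2 hexp

end Walker

open Walker in
/-- The word is followed forwards, except that the walk keeps running around loops in which no flag
goes down, leaving one only after `N` laps: within `N` steps it never gets `B` steps ahead. -/
theorem exists_pumping [Fintype κ] [Fintype Λ] (O : ℕ → κ → Prop) (lab : ℕ → Λ) (N : ℕ)
    (hB : 2 * ((Fintype.card κ + 1) * Fintype.card Λ) ≤ B)
    (hlab : ∀ x y, lab x = lab y → ∀ c, Pending O B x c ↔ Pending O B y c) :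
    ∃ f : ℕ → ℕ, (∀ k, lab (f k) = lab (expected f k)) ∧ (∀ k, f k ≤ expected f k) ∧
      (∀ k c q, q = f k ∨ q = expected f k → O q c → ∀ j ≤ N, Pending O B (f (j + k)) c) ∧
      Filter.Tendsto f Filter.atTop Filter.atTop := by
  choose a b hpa hab hbW hloop hend using exists_loop O lab (B := B) (by omega)
  let w : ℕ → Walker := fun k => (step a b N)^[k] ⟨0, N, 0⟩
  have hw : ∀ k, w (k + 1) = (w k).step a b N := fun k => Function.iterate_succ_apply' ..
  have hv : ∀ k, (w k).Valid b :=
    Valid.iterate_step hpa hab ⟨le_rfl, (hpa 0).trans_lt (hab 0)⟩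
  let f : ℕ → ℕ := fun k => (w k).pos
  have hf : ∀ k, f (k + 1) = ((w k).step a b N).pos := fun k => congrArg pos (hw k)
  have hfl : ∀ k, lab (f k) = lab (expected f k) := by
    rintro (_ | k)
    exacts [rfl, hf k ▸ lab_step_pos hloop]
  have hle : ∀ k, f k ≤ expected f k := by
    rintro (_ | k)
    exacts [le_rfl, hf k ▸ step_pos_le hab]
  have habove : ∀ k, (w k).Above a b (expected f k) := by
    rintro (_ | k)
    exacts [(hv 0).above, hw k ▸ (hv k).above_step hpa hab]
  refine ⟨f, hfl, hle, fun k c q hq hO => ?_,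
    tendsto_iterate_step_pos hpa hab ⟨le_rfl, (hpa 0).trans_lt (hab 0)⟩⟩
  have hqk : f k ≤ q := hq.elim ge_of_eq fun h => h ▸ hle k
  have hqa : (w k).Above a b q := hq.elim (fun h => h ▸ (hv k).above) fun h => h ▸ habove k
  have hstart : Pending O B q c := ⟨q, le_rfl, Nat.le_add_right _ _, hO⟩
  suffices h : ∀ j ≤ N, (w (j + k)).Above a b q ∧ Pending O B (f (j + k)) c from
    fun j hj => (h j hj).2
  intro j hj
  induction j with
  | zero =>
    rw [zero_add]
    exact ⟨hqa, hq.elim (fun h => h ▸ hstart) fun h => (hlab _ _ (hfl k) c).2 (h ▸ hstart)⟩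
  | succ j ih =>
    obtain ⟨hj_above, hj_pending⟩ := ih (by omega)
    have hlt : (w (j + k)).pos < f k + 2 * ((Fintype.card κ + 1) * Fintype.card Λ) := by
      have := (hv k).iterate_step_pos_lt hpa hab hbW (N := N) (j := j) (by omega)
      rwa [← Function.iterate_add_apply] at this
    rw [add_right_comm]
    refine ⟨hw (j + k) ▸ hj_above.step hpa hab, ?_⟩
    exact hf (j + k) ▸ hj_above.pending_step (hv _) (by omega)
      (fun x y h => hlab x y h c) hloop (fun p e h h' => hend p e h h' c) hO hj_pending

end Pumping

/-- The word `ρ` from position `m` on. -/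
def shift {S : Type*} (m : ℕ) (ρ : ℕ → S) : ℕ → S :=
  fun k => ρ (k + m)

/-- Linear temporal formulas over the states of a chain, closed under negation. All bounded
operators `ev` (eventually) and `alw` (always) share one bound, which is a parameter of the
semantics rather than of the syntax. -/
inductive PathFormula (S : Type*)
  | lit (p : Set S)
  | and (a b : PathFormula S)
  | or (a b : PathFormula S)
  | next (a : PathFormula S)
  | untl (a b : PathFormula S)
  | release (a b : PathFormula S)
  | ev (a : PathFormula S)
  | alw (a : PathFormula S)

namespace PathFormula

variable {S : Type*}

/-- Satisfaction of a path formula by the word `ρ` at a time `i`, under the bound `n`. -/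
def Sat (ρ : ℕ → S) (n : ℕ) : PathFormula S → ℕ → Prop
  | lit p, i => ρ i ∈ p
  | and a b, i => Sat ρ n a i ∧ Sat ρ n b i
  | or a b, i => Sat ρ n a i ∨ Sat ρ n b i
  | next a, i => Sat ρ n a (i + 1)
  | untl a b, i => Until (Sat ρ n a) (Sat ρ n b) i
  | release a b, i => ∀ j, Sat ρ n b (j + i) ∨ ∃ k < j, Sat ρ n a (k + i)
  | ev a, i => ∃ j ≤ n, Sat ρ n a (j + i)
  | alw a, i => ∀ j ≤ n, Sat ρ n a (j + i)

theorem sat_shift (ρ : ℕ → S) (n m : ℕ) (χ : PathFormula S) (i : ℕ) :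
    χ.Sat (shift m ρ) n i ↔ χ.Sat ρ n (i + m) := by
  induction χ generalizing i with
  | lit => rfl
  | next a ih => simp only [Sat, ih, add_right_comm]
  | _ => simp_all only [Sat, Until, add_assoc]

/-- The dual formula, satisfied exactly when the given one is not. -/
def neg : PathFormula S → PathFormula S
  | lit p => lit pᶜ
  | and a b => or (neg a) (neg b)
  | or a b => and (neg a) (neg b)
  | next a => next (neg a)
  | untl a b => release (neg a) (neg b)
  | release a b => untl (neg a) (neg b)
  | ev a => alw (neg a)
  | alw a => ev (neg a)

theorem neg_neg (χ : PathFormula S) : χ.neg.neg = χ := by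
  induction χ <;> simp_all only [neg, compl_compl]

theorem sat_neg (ρ : ℕ → S) (n : ℕ) (χ : PathFormula S) (i : ℕ) :
    χ.neg.Sat ρ n i ↔ ¬χ.Sat ρ n i := by
  induction χ generalizing i with
  | lit => rfl
  | and a b iha ihb => simp only [neg, Sat, iha, ihb, not_and_or]
  | or a b iha ihb => simp only [neg, Sat, iha, ihb, not_or]
  | next _ ih => exact ih _
  | untl a b iha ihb =>
    simp only [neg, Sat, Until, iha, ihb]
    push Not
    simp only [or_iff_not_imp_left, not_not]
  | release a b iha ihb =>
    simp only [neg, Sat, Until, iha, ihb]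
    push Not
    rfl
  | ev a ih => simp only [neg, Sat, ih, not_exists, not_and]
  | alw a ih => simp only [neg, Sat, ih, not_forall, exists_prop]

open Classical in
/-- The subformulas of a path formula that are not literals. -/
noncomputable def subs : PathFormula S → Finset (PathFormula S)
  | lit _ => ∅
  | and a b => insert (and a b) (subs a ∪ subs b)
  | or a b => insert (or a b) (subs a ∪ subs b)
  | next a => insert (next a) (subs a)
  | untl a b => insert (untl a b) (subs a ∪ subs b)
  | release a b => insert (release a b) (subs a ∪ subs b)
  | ev a => insert (ev a) (subs a)
  | alw a => insert (alw a) (subs a)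

variable {χ ψ : PathFormula S}

theorem subs_subset_of_mem (h : ψ ∈ χ.subs) : ψ.subs ⊆ χ.subs := by
  classical
  induction χ <;> grind [subs]

theorem sizeOf_le_of_mem_subs (h : ψ ∈ χ.subs) : sizeOf ψ ≤ sizeOf χ := by
  classical
  induction χ <;> grind [subs]

theorem neg_mem_subs_neg (h : ψ ∈ χ.subs) : ψ.neg ∈ χ.neg.subs := by
  classical
  induction χ <;> grind [subs, neg]

theorem card_subs_neg_le (χ : PathFormula S) : χ.neg.subs.card ≤ χ.subs.card :=
  Finset.card_le_card_of_injOn neg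
    (fun ψ hψ => Finset.mem_coe.2 <| by simpa only [neg_neg] using neg_mem_subs_neg hψ)
    (fun ψ _ ψ' _ h => by rw [← neg_neg ψ, h, neg_neg])

/-- A certificate, read off from the word `u` up to time `H`, that `χ` holds at time `i` under the
bound `n`. In place of a release that lasts forever it only asks for a state `t` with `A b t`, which
will mean that almost every path from `t` always satisfies `b`. For `ev` the bound is dropped. -/
def Cert (A : PathFormula S → S → Prop) (u : ℕ → S) (n H : ℕ) : PathFormula S → ℕ → Prop
  | lit p, i => i ≤ H ∧ u i ∈ p
  | and a b, i => Cert A u n H a i ∧ Cert A u n H b i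
  | or a b, i => Cert A u n H a i ∨ Cert A u n H b i
  | next a, i => Cert A u n H a (i + 1)
  | untl a b, i => Until (Cert A u n H a) (Cert A u n H b) i
  | release a b, i => Until (Cert A u n H b)
      (fun j => j ≤ H ∧ (A b (u j) ∨ Cert A u n H a j ∧ Cert A u n H b j)) i
  | ev a, i => Until (fun _ => True) (Cert A u n H a) i
  | alw a, i => ∀ j ≤ n, Cert A u n H a (j + i)

variable {A : PathFormula S → S → Prop} {u : ℕ → S} {n H i : ℕ}

theorem Cert.le (h : χ.Cert A u n H i) : i ≤ H := by
  induction χ generalizing i with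
  | lit => exact h.1
  | and a b iha => exact iha h.1
  | or a b iha ihb => exact h.elim iha ihb
  | next a ih => exact (Nat.le_succ i).trans (ih h)
  | untl a b _ ihb => exact Until.le h fun _ => ihb
  | release => exact Until.le h fun _ => And.left
  | ev a ih => exact Until.le h fun _ => ih
  | alw a ih => exact ih (by simpa only [zero_add] using h 0 n.zero_le)

theorem Sat.eventually_cert {Sg : Finset (PathFormula S)} (h : χ.Sat u n i) (hχ : χ.subs ⊆ Sg)
    (hA : ∀ a b, release a b ∈ Sg → ∀ i, (∀ l, b.Sat u n (l + i)) → ∃ l, A b (u (l + i))) :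
    ∀ᶠ H in Filter.atTop, χ.Cert A u n H i := by
  classical
  induction χ generalizing i with
  | lit p => exact (Filter.eventually_ge_atTop i).mono fun H hH => ⟨hH, h⟩
  | and a b iha ihb =>
    exact (iha h.1 (by grind [subs])).and (ihb h.2 (by grind [subs]))
  | or a b iha ihb =>
    rcases h with h | h
    · exact (iha h (by grind [subs])).mono fun _ => .inl
    · exact (ihb h (by grind [subs])).mono fun _ => .inr
  | next a ih => exact ih h (by grind [subs])
  | untl a b iha ihb =>
    exact Until.eventually h (fun _ hk => iha hk (by grind [subs]))
      fun _ hk => ihb hk (by grind [subs])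
  | release a b iha ihb =>
    have hb : ∀ k, b.Sat u n k → ∀ᶠ H in Filter.atTop, b.Cert A u n H k :=
      fun _ hk => ihb hk (by grind [subs])
    have h_until : Until (b.Sat u n) (fun j => A b (u j) ∨ a.Sat u n j ∧ b.Sat u n j) i := by
      refine ((release_iff_until.1 h).mono (fun _ => id) fun j hj => ?_).trans
      rcases hj with hj | hj
      · obtain ⟨l, hl⟩ := hA a b (hχ (by simp [subs])) j hj
        exact ⟨l, .inl hl, fun k _ => hj k⟩
      · exact .of_right (.inr hj)
    refine h_until.eventually hb fun j hj => (Filter.eventually_ge_atTop j).and ?_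
    rcases hj with hj | ⟨hja, hjb⟩
    · exact .of_forall fun _ => .inl hj
    · exact ((iha hja (by grind [subs])).and (hb j hjb)).mono fun _ => .inr
  | ev a ih =>
    obtain ⟨j, -, hj⟩ := h
    exact (ih hj (by grind [subs])).mono fun _ hH => ⟨j, hH, fun _ _ => trivial⟩
  | alw a ih =>
    exact (Filter.eventually_all_finite (Set.finite_le_nat n)).2
      fun j hj => ih (h j hj) (by grind [subs])

/-- Following `u` along `f` instead of in order preserves the certificates of the formulas in `Sg`,
turns the bound `n₁` into `n₂`, and leaves the horizon `H` behind by time `K`. -/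
structure IsReplay (A : PathFormula S → S → Prop) (u : ℕ → S) (n₁ n₂ H : ℕ)
    (Sg : Finset (PathFormula S)) (f : ℕ → ℕ) (K : ℕ) : Prop where
  state_eq : ∀ k, u (f k) = u (expected f k)
  le_horizon : ∀ k, expected f k ≤ H → f k ≤ H
  horizon_lt : ∀ k, K ≤ k → H < f k
  cert : ∀ χ ∈ Sg, (∀ ψ, χ ≠ alw ψ) → ∀ k,
    χ.Cert A u n₁ H (expected f k) → χ.Cert A u n₁ H (f k)
  cert_alw : ∀ ψ, alw ψ ∈ Sg → ∀ k q, q = f k ∨ q = expected f k → (alw ψ).Cert A u n₁ H q →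
    ∀ j ≤ n₂, ψ.Cert A u n₁ H (f (j + k))
  le_bound : ∀ ψ, ev ψ ∈ Sg → K ≤ n₂

theorem Until.exists_replay {p q : ℕ → Prop} {f : ℕ → ℕ} {K k : ℕ}
    (hf : ∀ k, Until p q (expected f k) → Until p q (f k)) (hq : ∀ i, q i → i ≤ H)
    (hK : ∀ k, K ≤ k → H < f k) (h : Until p q (f k)) :
    ∃ j, j + k < K ∧ q (f (j + k)) ∧ ∀ i < j, p (f (i + k)) := by
  have hkK : k < K := by
    by_contra! hKk
    exact (hK k hKk).not_ge (h.le hq)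
  induction hm : K - k using Nat.strong_induction_on generalizing k with
  | _ m ih =>
    rcases until_iff.1 h with hqk | ⟨hpk, hnext⟩
    · exact ⟨0, by simpa using hkK, by simpa using hqk, by simp⟩
    · have hnext' : Until p q (f (k + 1)) := hf (k + 1) hnext
      have hkK' : k + 1 < K := by
        by_contra! hKk
        exact (hK _ hKk).not_ge (hnext'.le hq)
      obtain ⟨j, hjK, hqj, hpj⟩ := ih _ (by omega) hnext' hkK' rfl
      refine ⟨j + 1, by omega, by rwa [add_right_comm], ?_⟩
      rintro (_ | i) hi
      · simpa using hpk
      · rw [add_right_comm]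
        exact hpj i (by omega)

theorem IsReplay.sat {n₁ n₂ K : ℕ} {Sg : Finset (PathFormula S)} {f : ℕ → ℕ} {ρ : ℕ → S}
    (h : IsReplay A u n₁ n₂ H Sg f K) (hρ : ∀ k < K, ρ k = u (f k))
    (hA : ∀ a b, release a b ∈ Sg → ∀ k, A b (ρ k) → ∀ l, b.Sat ρ n₂ (l + k))
    (hχ : χ.subs ⊆ Sg) {k q : ℕ} (hq : q = f k ∨ q = expected f k) (hc : χ.Cert A u n₁ H q) :
    χ.Sat ρ n₂ k := by
  classical
  have hH : ∀ k, f k ≤ H → k < K := fun k hk => by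
    by_contra! hKk
    exact (h.horizon_lt k hKk).not_ge hk
  have hcert : ∀ χ ∈ Sg, (∀ ψ, χ ≠ alw ψ) → ∀ k q, q = f k ∨ q = expected f k →
      χ.Cert A u n₁ H q → χ.Cert A u n₁ H (f k) :=
    fun χ hχ hne k q hq hc => hq.elim (fun hq => hq ▸ hc) fun hq => h.cert χ hχ hne k (hq ▸ hc)
  induction χ generalizing k q with
  | lit p =>
    have hqf : u q = u (f k) ∧ f k ≤ H := by
      rcases hq with rfl | rfl
      exacts [⟨rfl, hc.1⟩, ⟨(h.state_eq k).symm, h.le_horizon k hc.1⟩]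
    exact (hρ k (hH k hqf.2) ▸ hqf.1 ▸ hc.2 : ρ k ∈ p)
  | and a b iha ihb =>
    exact ⟨iha (by grind [subs]) hq hc.1, ihb (by grind [subs]) hq hc.2⟩
  | or a b iha ihb =>
    exact hc.imp (iha (by grind [subs]) hq) (ihb (by grind [subs]) hq)
  | next a ih =>
    exact ih (k := k + 1) (by grind [subs]) (.inr rfl)
      (hcert (next a) (hχ (by simp [subs])) (by simp) k q hq hc)
  | untl a b iha ihb =>
    have hmem : untl a b ∈ Sg := hχ (by simp [subs])
    obtain ⟨j, -, hbj, haj⟩ := Until.exists_replay (h.cert _ hmem (by simp)) (fun _ => Cert.le)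
      h.horizon_lt (hcert _ hmem (by simp) k q hq hc)
    exact ⟨j, ihb (by grind [subs]) (.inl rfl) hbj,
      fun i hi => iha (by grind [subs]) (.inl rfl) (haj i hi)⟩
  | release a b iha ihb =>
    have hmem : release a b ∈ Sg := hχ (by simp [subs])
    have hb : ∀ k, b.Cert A u n₁ H (f k) → b.Sat ρ n₂ k :=
      fun k => ihb (by grind [subs]) (.inl rfl)
    obtain ⟨j, hjK, ⟨-, hj⟩, hbj⟩ := Until.exists_replay (h.cert _ hmem (by simp))
      (fun _ => And.left) h.horizon_lt (hcert _ hmem (by simp) k q hq hc)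
    refine release_iff_until.2 ⟨j, ?_, fun i hi => hb _ (hbj i hi)⟩
    rcases hj with hj | ⟨haj, hbj⟩
    · exact .inl (hA a b hmem _ (hρ _ hjK ▸ hj))
    · exact .inr ⟨iha (by grind [subs]) (.inl rfl) haj, hb _ hbj⟩
  | ev a ih =>
    have hmem : ev a ∈ Sg := hχ (by simp [subs])
    obtain ⟨j, hjK, haj, -⟩ := Until.exists_replay (h.cert _ hmem (by simp)) (fun _ => Cert.le)
      h.horizon_lt (hcert _ hmem (by simp) k q hq hc)
    have := h.le_bound a hmem
    exact ⟨j, by omega, ih (by grind [subs]) (.inl rfl) haj⟩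
  | alw a ih =>
    exact fun j hj => ih (by grind [subs]) (.inl rfl)
      (h.cert_alw a (hχ (by simp [subs])) k q hq hc j hj)

section Existence

variable [Fintype S] {n₁ n₂ : ℕ} {Sg : Finset (PathFormula S)}

theorem exists_isReplay_of_alw_notMem (hSg : ∀ ψ, alw ψ ∉ Sg)
    (hn : Fintype.card S * 2 ^ Sg.card ≤ n₂) : ∃ f K, IsReplay A u n₁ n₂ H Sg f K := by
  classical
  obtain ⟨f, hlab, hle, hlt⟩ :=
    exists_contraction (fun k => (u k, {c : Sg | c.1.Cert A u n₁ H k})) H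
  rw [Fintype.card_prod, Fintype.card_set, Fintype.card_coe] at hlt
  simp only [Prod.mk.injEq, Set.ext_iff, Set.mem_ofPred_eq] at hlab
  exact ⟨f, _, fun k => (hlab k).1, hle, hlt, fun χ hχ _ k => ((hlab k).2 ⟨χ, hχ⟩).2,
    fun ψ hψ => (hSg ψ hψ).elim, fun _ _ => hn⟩

theorem exists_isReplay_of_ev_notMem (hSg : ∀ ψ, ev ψ ∉ Sg)
    (hn : 2 * ((Sg.card + 1) * (Fintype.card S * 2 ^ Sg.card)) ≤ n₁) (n₂ : ℕ) :
    ∃ f K, IsReplay A u n₁ n₂ H Sg f K := by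
  classical
  let O : ℕ → Sg → Prop := fun k c => (∃ ψ, c.1 = alw ψ) ∧ c.1.Cert A u n₁ H k
  let lab : ℕ → S × Set Sg := fun k =>
    (u k, {c | Pending O n₁ k c ∨ (¬∃ ψ, c.1 = alw ψ) ∧ c.1.Cert A u n₁ H k})
  have hO : ∀ k c, Pending O n₁ k c → ∃ ψ, c.1 = alw ψ := fun _ _ ⟨_, _, _, hc⟩ => hc.1
  have hpending : ∀ x y, lab x = lab y → ∀ c, Pending O n₁ x c ↔ Pending O n₁ y c := by
    intro x y hxy c
    have hc := Set.ext_iff.1 (congrArg Prod.snd hxy) c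
    simp only [lab, Set.mem_ofPred_eq] at hc
    have := hO x c
    have := hO y c
    tauto
  obtain ⟨f, hlab, hle, hper, htop⟩ := exists_pumping O lab n₂
    (by rwa [Fintype.card_prod, Fintype.card_set, Fintype.card_coe]) hpending
  obtain ⟨K, hK⟩ := Filter.eventually_atTop.1 (htop.eventually_gt_atTop H)
  refine ⟨f, K, fun k => congrArg Prod.fst (hlab k), fun k => (hle k).trans, hK, ?_, ?_,
    fun ψ hψ => (hSg ψ hψ).elim⟩
  · intro χ hχ hne k hc
    have hnot : ¬∃ ψ, χ = alw ψ := fun ⟨ψ, hψ⟩ => hne ψ hψ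
    have hmem : (⟨χ, hχ⟩ : Sg) ∈ (lab (f k)).2 := hlab k ▸ .inr ⟨hnot, hc⟩
    exact (hmem.resolve_left fun hp => hnot (hO _ _ hp)).2
  · intro ψ hψ k q hq hc j hj
    obtain ⟨i, hi, hin, -, hci⟩ := hper k ⟨alw ψ, hψ⟩ q hq ⟨⟨ψ, rfl⟩, hc⟩ j hj
    simpa only [Nat.sub_add_cancel hi] using hci (f (j + k) - i) (by omega)

end Existence

end PathFormula

theorem preimage_restrict_Iic_singleton {S : Type*} (n : ℕ) (g : Finset.Iic n → S) :
    (Finset.Iic n).restrict (π := fun _ => S) ⁻¹' ({g} : Set (Finset.Iic n → S)) =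
      PiNat.cylinder (fun k => g ⟨min k n, Finset.mem_Iic.2 (min_le_right k n)⟩) (n + 1) := by
  ext π
  simp only [Set.mem_preimage, Set.mem_singleton_iff, funext_iff, PiNat.mem_cylinder_iff,
    Finset.restrict, Subtype.forall, Finset.mem_Iic, Nat.lt_succ_iff]
  refine forall₂_congr fun k hk => ?_
  simp only [min_eq_left hk]

theorem isOpen_iff_cylinder {S : Type*} [TopologicalSpace S] [DiscreteTopology S]
    {U : Set (ℕ → S)} : IsOpen U ↔ ∀ π ∈ U, ∃ n, PiNat.cylinder π n ⊆ U := by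
  rw [(PiNat.isTopologicalBasis_cylinders fun _ => S).isOpen_iff]
  refine forall₂_congr fun π _ => ⟨?_, fun ⟨n, hn⟩ =>
    ⟨_, ⟨π, n, rfl⟩, PiNat.self_mem_cylinder π n, hn⟩⟩
  rintro ⟨_, ⟨σ, n, rfl⟩, hπ, hσ⟩
  exact ⟨n, (PiNat.mem_cylinder_iff_eq.1 hπ).trans_subset hσ⟩

section PathSpace

variable {S : Type*} [MeasurableSpace S]

theorem measurable_shift (m : ℕ) : Measurable (shift m : (ℕ → S) → ℕ → S) :=
  measurable_pi_lambda _ fun _ => measurable_pi_apply _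

variable [DiscreteMeasurableSpace S]

theorem measurableSet_natCylinder (u : ℕ → S) (n : ℕ) : MeasurableSet (PiNat.cylinder u n) := by
  rw [PiNat.cylinder_eq_pi]
  exact .pi (Finset.countable_toSet _) fun _ _ => .of_discrete

variable [Finite S]

theorem measure_le_of_cylinder_subset {ν : Measure (ℕ → S)} {m : MeasurableSpace (ℕ → S)}
    {μ : Measure[m] (ℕ → S)}
    (h : ∀ u n, μ (PiNat.cylinder u (n + 1)) ≤ ν (PiNat.cylinder u (n + 1))) {E : Set (ℕ → S)}
    {n : ℕ} (hE : ∀ π ∈ E, PiNat.cylinder π (n + 1) ⊆ E) : μ E ≤ ν E := by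
  let r : (ℕ → S) → Finset.Iic n → S := (Finset.Iic n).restrict
  have hfin := (r '' E).toFinite
  have hr : r ⁻¹' (r '' E) = E := by
    refine Set.Subset.antisymm ?_ (Set.subset_preimage_image _ _)
    rintro π ⟨σ, hσ, hσπ⟩
    exact hE σ hσ <| PiNat.mem_cylinder_iff.2 fun k hk =>
      (congrFun hσπ ⟨k, Finset.mem_Iic.2 (Nat.lt_succ_iff.1 hk)⟩).symm
  calc
    μ E = μ (⋃ g ∈ hfin.toFinset, r ⁻¹' {g}) := by
      simp only [Set.Finite.mem_toFinset, ← Set.preimage_iUnion₂, Set.biUnion_of_singleton, hr]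
    _ ≤ ∑ g ∈ hfin.toFinset, μ (r ⁻¹' {g}) := measure_biUnion_finset_le _ _
    _ ≤ ∑ g ∈ hfin.toFinset, ν (r ⁻¹' {g}) := by
      refine Finset.sum_le_sum fun g _ => ?_
      rw [preimage_restrict_Iic_singleton]
      exact h _ _
    _ = ν E := by
      rw [sum_measure_preimage_singleton, Set.Finite.coe_toFinset, hr]
      rintro g -
      rw [preimage_restrict_Iic_singleton]
      exact measurableSet_natCylinder _ _

theorem measure_le_of_forall_cylinder {ν : Measure (ℕ → S)} [IsFiniteMeasure ν]
    {m : MeasurableSpace (ℕ → S)} {μ : Measure[m] (ℕ → S)}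
    (h : ∀ u n, μ (PiNat.cylinder u (n + 1)) ≤ ν (PiNat.cylinder u (n + 1))) (E : Set (ℕ → S)) :
    μ E ≤ ν E := by
  let _ : TopologicalSpace S := ⊥
  have : DiscreteTopology S := ⟨rfl⟩
  refine le_of_forall_gt fun r hr => ?_
  obtain ⟨U, hEU, hU, hUr⟩ := @Set.exists_isOpen_lt_of_lt _ .pi ν _ _ E r hr
  let V (n : ℕ) : Set (ℕ → S) := {π | PiNat.cylinder π (n + 1) ⊆ U}
  have hV : U ⊆ ⋃ n, V n := fun π hπ =>
    have ⟨n, hn⟩ := isOpen_iff_cylinder.1 hU π hπ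
    Set.mem_iUnion.2 ⟨n, (PiNat.cylinder_anti π n.le_succ).trans hn⟩
  have hVmono : Monotone V := fun n k hnk π hπ =>
    (PiNat.cylinder_anti π (Nat.succ_le_succ hnk)).trans hπ
  have hVU (n : ℕ) : V n ⊆ U := fun π hπ => hπ (PiNat.self_mem_cylinder π _)
  have hVcyl (n : ℕ) : ∀ π ∈ V n, PiNat.cylinder π (n + 1) ⊆ V n := fun π hπ σ hσ =>
    (PiNat.mem_cylinder_iff_eq.1 hσ).trans_subset hπ
  calc
    μ E ≤ μ (⋃ n, V n) := measure_mono (hEU.trans hV)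
    _ = ⨆ n, μ (V n) := hVmono.measure_iUnion
    _ ≤ ν U := iSup_le fun n =>
      (measure_le_of_cylinder_subset h (hVcyl n)).trans (measure_mono (hVU n))
    _ < r := hUr

theorem measure_eq_of_forall_cylinder {μ ν : Measure (ℕ → S)} [IsFiniteMeasure μ]
    [IsFiniteMeasure ν]
    (h : ∀ u n, μ (PiNat.cylinder u (n + 1)) = ν (PiNat.cylinder u (n + 1))) : μ = ν :=
  Measure.ext fun E _ => le_antisymm (measure_le_of_forall_cylinder (fun u n => (h u n).le) E)
    (measure_le_of_forall_cylinder (fun u n => (h u n).ge) E)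

end PathSpace

/-- `μ` is the law of the paths from `s` of the Markov chain with transition matrix `P`. Only the
masses of cylinders are prescribed, so that the definition makes sense for every σ-algebra on the
path space. -/
structure IsPathMeasure {S : Type*} {m : MeasurableSpace (ℕ → S)} (P : S → S → ℝ≥0∞) (s : S)
    (μ : Measure (ℕ → S)) : Prop where
  ae_start : ∀ᵐ π ∂μ, π 0 = s
  measure_cylinder : ∀ (u : ℕ → S) (n : ℕ), u 0 = s →
    μ (PiNat.cylinder u (n + 1)) = ∏ k ∈ Finset.range n, P (u k) (u (k + 1))

namespace IsPathMeasure

variable {S : Type*} {m : MeasurableSpace (ℕ → S)} {μ : Measure (ℕ → S)} {P : S → S → ℝ≥0∞} {s : S}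

theorem of_forall_measure_cylinder [Countable S] [DecidableEq S]
    (h : ∀ (u : ℕ → S) (n : ℕ), μ (PiNat.cylinder u (n + 1)) =
      (if u 0 = s then 1 else 0) * ∏ k ∈ Finset.range n, P (u k) (u (k + 1))) :
    IsPathMeasure P s μ where
  ae_start := by
    have hne (t : S) (ht : t ≠ s) : ∀ᵐ π ∂μ, π ∉ PiNat.cylinder (fun _ => t) 1 := by
      refine measure_eq_zero_iff_ae_notMem.1 ?_
      rw [h _ 0, if_neg ht, zero_mul]
    filter_upwards [ae_all_iff.2 fun t => ae_all_iff.2 (hne t)] with π hπ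
    by_contra hs
    exact hπ (π 0) hs (PiNat.mem_cylinder_iff.2 fun k hk => by rw [Nat.lt_one_iff.1 hk])
  measure_cylinder u n hu := by rw [h, if_pos hu, one_mul]

theorem isProbabilityMeasure (hμ : IsPathMeasure P s μ) : IsProbabilityMeasure μ := by
  have h := hμ.measure_cylinder (fun _ => s) 0 rfl
  rw [Finset.range_zero, Finset.prod_empty] at h
  refine ⟨h ▸ measure_congr (Filter.eventuallyEq_set.2 ?_).symm⟩
  filter_upwards [hμ.ae_start] with π hπ
  simp [PiNat.mem_cylinder_iff, hπ]

theorem measure_cylinder_of_ne (hμ : IsPathMeasure P s μ) {u : ℕ → S} (hu : u 0 ≠ s) (n : ℕ) :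
    μ (PiNat.cylinder u (n + 1)) = 0 := by
  refine measure_eq_zero_iff_ae_notMem.2 (hμ.ae_start.mono fun π hπ hmem => hu ?_)
  rw [← PiNat.mem_cylinder_iff.1 hmem 0 n.succ_pos, hπ]

theorem transition_le_one (hμ : IsPathMeasure P s μ) (t : S) : P s t ≤ 1 := by
  have := hμ.isProbabilityMeasure
  have h := hμ.measure_cylinder (fun k => if k = 0 then s else t) 1 (if_pos rfl)
  rw [Finset.prod_range_one, if_pos rfl, zero_add, if_neg one_ne_zero] at h
  exact h ▸ prob_le_one

theorem preimage_shift_one_cylinder_ae_eq (hμ : IsPathMeasure P s μ) {u : ℕ → S} (hu : u 0 = s)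
    (n : ℕ) : shift 1 ⁻¹' PiNat.cylinder (shift 1 u) n =ᵐ[μ] PiNat.cylinder u (n + 1) := by
  refine Filter.eventuallyEq_set.2 (hμ.ae_start.mono fun π hπ => ?_)
  simp only [Set.mem_preimage, PiNat.mem_cylinder_iff, shift, Nat.forall_lt_succ_left (n := n),
    hπ, hu, true_and]

end IsPathMeasure

/-- The path from `s` that moves at time `n` from `t` to `ω (n, t)`. -/
def drivenPath {S : Type*} (s : S) (ω : ℕ × S → S) : ℕ → S
  | 0 => s
  | n + 1 => ω (n, drivenPath s ω n)

theorem drivenPath_mem_cylinder_iff {S : Type*} (ω : ℕ × S → S) (u : ℕ → S) (n : ℕ) :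
    drivenPath (u 0) ω ∈ PiNat.cylinder u (n + 1) ↔ ∀ k < n, ω (k, u k) = u (k + 1) := by
  rw [PiNat.mem_cylinder_iff]
  refine ⟨fun h k hk => ?_, fun h k => ?_⟩
  · rw [← h (k + 1) (by lia), drivenPath, h k (by lia)]
  · induction k with
    | zero => exact fun _ => rfl
    | succ k ih => exact fun hk => by rw [drivenPath, ih (by lia), h k (by lia)]

section DiscreteChain

variable {S : Type*} [MeasurableSpace S] [DiscreteMeasurableSpace S]

theorem measurable_ae_mem (ν : S → Measure (ℕ → S)) (F : Set (ℕ → S)) (k : ℕ) :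
    Measurable fun π : ℕ → S => ∀ᵐ σ ∂ν (π k), σ ∈ F :=
  (Measurable.of_discrete (f := fun t => ∀ᵐ σ ∂ν t, σ ∈ F)).comp (measurable_pi_apply k)

theorem measurable_drivenPath [Countable S] (s : S) : Measurable (drivenPath s) := by
  refine measurable_pi_lambda _ fun n => ?_
  induction n with
  | zero => exact measurable_const
  | succ n ih =>
    have heval : Measurable fun p : (ℕ × S → S) × S => p.1 (n, p.2) :=
      measurable_from_prod_countable_left fun t => measurable_pi_apply (n, t)
    exact heval.comp (measurable_id.prodMk ih)

theorem IsPathMeasure.measure_eq [Finite S] {P : S → S → ℝ≥0∞} {s : S} {ν : Measure (ℕ → S)}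
    (hν : IsPathMeasure P s ν) {E : Set (ℕ → S)} (hE : MeasurableSet E)
    {m : MeasurableSpace (ℕ → S)} {μ : Measure[m] (ℕ → S)} (hμ : IsPathMeasure P s μ) :
    μ E = ν E := by
  have := hμ.isProbabilityMeasure
  have := hν.isProbabilityMeasure
  have hle := measure_le_of_forall_cylinder (μ := μ) (ν := ν) fun u n => by
    by_cases hu : u 0 = s
    · rw [hμ.measure_cylinder u n hu, hν.measure_cylinder u n hu]
    · rw [hμ.measure_cylinder_of_ne hu, hν.measure_cylinder_of_ne hu]
  refine (hle E).antisymm ((ENNReal.add_le_add_iff_right (measure_ne_top ν Eᶜ)).1 ?_)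
  calc
    ν E + ν Eᶜ = μ (E ∪ Eᶜ) := by
      rw [measure_add_measure_compl hE, Set.union_compl_self, measure_univ, measure_univ]
    _ ≤ μ E + ν Eᶜ := (measure_union_le E Eᶜ).trans (add_le_add_right (hle Eᶜ) _)

theorem IsPathMeasure.measure_eq_one_iff [Finite S] {P : S → S → ℝ≥0∞} {s : S}
    {ν : Measure (ℕ → S)} (hν : IsPathMeasure P s ν) {E : Set (ℕ → S)} (hE : MeasurableSet E)
    {m : MeasurableSpace (ℕ → S)} {μ : Measure[m] (ℕ → S)} (hμ : IsPathMeasure P s μ) :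
    μ E = 1 ↔ ∀ᵐ π ∂ν, π ∈ E := by
  have := hν.isProbabilityMeasure
  rw [hν.measure_eq hE hμ, ← prob_compl_eq_zero_iff hE]
  rfl

theorem exists_isPathMeasure [Fintype S] {P : S → S → ℝ≥0∞} (hP : ∀ s, ∑ t, P s t = 1) (s : S) :
    ∃ μ : Measure (ℕ → S), IsPathMeasure P s μ := by
  classical
  let Q (p : ℕ × S) : Measure S := (PMF.ofFintype (P p.2) (hP p.2)).toMeasure
  have hQ (p : ℕ × S) (t : S) : Q p {t} = P p.2 t := by
    rw [PMF.toMeasure_apply_singleton _ _ .of_discrete, PMF.ofFintype_apply]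
  have hpath := measurable_drivenPath s
  refine ⟨(Measure.infinitePi Q).map (drivenPath s), ?_, fun u n hu => ?_⟩
  · exact (ae_map_iff hpath.aemeasurable (measurable_pi_apply 0 (.of_discrete (s := {s})))).2
      (.of_forall fun _ => rfl)
  · subst hu
    have hpre : drivenPath (u 0) ⁻¹' PiNat.cylinder u (n + 1) =
        Set.pi ((Finset.range n).image fun k => (k, u k)) fun p => {u (p.1 + 1)} := by
      ext ω
      rw [Set.mem_preimage, drivenPath_mem_cylinder_iff]
      simp
    rw [Measure.map_apply hpath (measurableSet_natCylinder _ _), hpre,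
      Measure.infinitePi_pi _ fun _ _ => .of_discrete,
      Finset.prod_image fun _ _ _ _ h => congrArg Prod.fst h]
    simp only [hQ]

variable {P : S → S → ℝ≥0∞} {ν : S → Measure (ℕ → S)} (hν : ∀ s, IsPathMeasure P s (ν s))
include hν

theorem map_shift_one_eq [Fintype S] (s : S) : (ν s).map (shift 1) = ∑ t, P s t • ν t := by
  have (t : S) := (hν t).isProbabilityMeasure
  have : IsFiniteMeasure (∑ t, P s t • ν t) := ⟨by
    simp only [Measure.coe_finsetSum, Finset.sum_apply, Measure.smul_apply, measure_univ,
      smul_eq_mul, mul_one]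
    exact ENNReal.sum_lt_top.2 fun t _ =>
      ((hν s).transition_le_one t).trans_lt ENNReal.one_lt_top⟩
  refine measure_eq_of_forall_cylinder fun u n => ?_
  let w : ℕ → S := fun | 0 => s | k + 1 => u k
  calc
    (ν s).map (shift 1) (PiNat.cylinder u (n + 1))
        = ν s (shift 1 ⁻¹' PiNat.cylinder (shift 1 w) (n + 1)) :=
      Measure.map_apply (measurable_shift 1) (measurableSet_natCylinder _ _)
    _ = P s (u 0) * ∏ k ∈ Finset.range n, P (u k) (u (k + 1)) := by
      rw [measure_congr ((hν s).preimage_shift_one_cylinder_ae_eq rfl _),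
        (hν s).measure_cylinder _ _ rfl, Finset.prod_range_succ', mul_comm]
    _ = ∑ t, P s t * ν t (PiNat.cylinder u (n + 1)) := by
      rw [Finset.sum_eq_single (u 0), (hν (u 0)).measure_cylinder _ _ rfl]
      · intro t _ ht
        rw [(hν t).measure_cylinder_of_ne ht.symm, mul_zero]
      · exact fun h => (h (Finset.mem_univ _)).elim
    _ = (∑ t, P s t • ν t) (PiNat.cylinder u (n + 1)) := by
      simp only [Measure.coe_finsetSum, Finset.sum_apply, Measure.smul_apply, smul_eq_mul]

variable [Finite S]

theorem ae_shift_one_iff {E : Set (ℕ → S)} (hE : MeasurableSet E) (s : S) :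
    (∀ᵐ π ∂ν s, shift 1 π ∈ E) ↔ ∀ t, P s t ≠ 0 → ∀ᵐ π ∂ν t, π ∈ E := by
  cases nonempty_fintype S
  rw [← ae_map_iff (p := (· ∈ E)) (measurable_shift 1).aemeasurable hE, map_shift_one_eq hν]
  simp only [ae_iff, Measure.coe_finsetSum, Finset.sum_apply, Measure.smul_apply, smul_eq_mul,
    Finset.sum_eq_zero_iff, Finset.mem_univ, true_imp_iff, mul_eq_zero, or_iff_not_imp_left]

theorem ae_shift_iff {E : Set (ℕ → S)} (hE : MeasurableSet E) (n : ℕ) (s : S) :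
    (∀ᵐ π ∂ν s, shift n π ∈ E) ↔ ∀ᵐ π ∂ν s, ∀ᵐ σ ∂ν (π n), σ ∈ E := by
  induction n generalizing s with
  | zero =>
    have := (hν s).isProbabilityMeasure
    calc
      _ ↔ ∀ᵐ σ ∂ν s, σ ∈ E := Iff.rfl
      _ ↔ ∀ᵐ _ ∂ν s, ∀ᵐ σ ∂ν s, σ ∈ E := Filter.eventually_const.symm
      _ ↔ _ := Filter.eventually_congr ((hν s).ae_start.mono fun π hπ => by rw [hπ])
  | succ n ih =>
    calc
      _ ↔ ∀ t, P s t ≠ 0 → ∀ᵐ π ∂ν t, shift n π ∈ E :=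
        ae_shift_one_iff hν (measurable_shift n hE) s
      _ ↔ ∀ t, P s t ≠ 0 → ∀ᵐ π ∂ν t, ∀ᵐ σ ∂ν (π n), σ ∈ E := by simp only [ih]
      _ ↔ _ := (ae_shift_one_iff hν (measurable_ae_mem ν E n).setOf s).symm

theorem measure_inter_cylinder_le {E : Set (ℕ → S)} (hE : MeasurableSet E)
    (hsub : E ⊆ shift 1 ⁻¹' E) {c : ℝ≥0∞} (hc : ∀ t, ν t E ≤ c) (s : S) (u : ℕ → S) (n : ℕ) :
    ν s (PiNat.cylinder u n ∩ E) ≤ c * ν s (PiNat.cylinder u n) := by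
  cases nonempty_fintype S
  have (t : S) := (hν t).isProbabilityMeasure
  induction n generalizing s u with
  | zero => simpa only [PiNat.cylinder_zero, Set.univ_inter, measure_univ, mul_one] using hc s
  | succ n ih =>
    by_cases hu : u 0 = s
    · have hmap (E : Set (ℕ → S)) (hE : MeasurableSet E) :
          ν s (shift 1 ⁻¹' E) = ∑ t, P s t * ν t E := by
        rw [← Measure.map_apply (measurable_shift 1) hE, map_shift_one_eq hν]
        simp only [Measure.coe_finsetSum, Finset.sum_apply, Measure.smul_apply, smul_eq_mul]
      have hcyl := (hν s).preimage_shift_one_cylinder_ae_eq hu n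
      calc
        ν s (PiNat.cylinder u (n + 1) ∩ E)
            ≤ ν s (shift 1 ⁻¹' (PiNat.cylinder (shift 1 u) n ∩ E)) :=
          (measure_mono (Set.inter_subset_inter_right _ hsub)).trans_eq
            (measure_congr (hcyl.inter (ae_eq_refl _))).symm
        _ = ∑ t, P s t * ν t (PiNat.cylinder (shift 1 u) n ∩ E) :=
          hmap _ ((measurableSet_natCylinder _ _).inter hE)
        _ ≤ ∑ t, P s t * (c * ν t (PiNat.cylinder (shift 1 u) n)) := by gcongr; exact ih _ _
        _ = c * ν s (PiNat.cylinder u (n + 1)) := by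
          rw [← measure_congr hcyl, hmap _ (measurableSet_natCylinder _ _), Finset.mul_sum]
          simp only [mul_left_comm c]
    · rw [measure_mono_null Set.inter_subset_left ((hν s).measure_cylinder_of_ne hu n)]
      exact zero_le

theorem ae_forall_transition_ne_zero (s : S) : ∀ᵐ π ∂ν s, ∀ k, P (π k) (π (k + 1)) ≠ 0 := by
  refine ae_all_iff.2 fun k => ?_
  have hE : MeasurableSet {π : ℕ → S | P (π 0) (π 1) ≠ 0} :=
    (measurable_pi_apply (X := fun _ : ℕ => S) 0).prodMk (measurable_pi_apply 1)
      (MeasurableSet.of_discrete (s := {p : S × S | P p.1 p.2 ≠ 0}))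
  have hstep (s : S) : ∀ᵐ π ∂ν s, P (π 0) (π 1) ≠ 0 := by
    have h := (ae_shift_one_iff hν (measurable_pi_apply 0
      (.of_discrete (s := {t | P s t ≠ 0}))) s).2 fun t ht => (hν t).ae_start.mono ?_
    · filter_upwards [h, (hν s).ae_start] with π h₁ h₀
      rw [h₀]
      exact h₁
    · rintro π rfl
      exact ht
  filter_upwards [(ae_shift_iff hν hE k s).2 (.of_forall fun π => hstep (π k))] with π hπ
  simpa only [Set.mem_ofPred_eq, shift, zero_add, add_comm 1 k] using hπ

theorem measure_eq_zero_of_forall_ne_one {E : Set (ℕ → S)} (hE : MeasurableSet E)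
    (hsub : E ⊆ shift 1 ⁻¹' E) (h : ∀ t, ν t E ≠ 1) (s : S) : ν s E = 0 := by
  cases nonempty_fintype S
  have (t : S) := (hν t).isProbabilityMeasure
  let c : ℝ≥0∞ := Finset.univ.sup fun t => ν t E
  have hc : c < 1 := (Finset.sup_lt_iff zero_lt_one).2 fun t _ => prob_le_one.lt_of_ne (h t)
  have : IsFiniteMeasure (c • ν s) := Measure.smul_finite _ (hc.trans ENNReal.one_lt_top).ne
  have hle : (ν s).restrict E ≤ c • ν s := by
    refine measure_le_of_forall_cylinder fun u n => ?_
    rw [Measure.restrict_apply (measurableSet_natCylinder _ _)]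
    exact measure_inter_cylinder_le hν hE hsub
      (fun t => Finset.le_sup (f := fun t => ν t E) (Finset.mem_univ t)) s u (n + 1)
  by_contra hne
  have hmul := hle E
  rw [Measure.restrict_apply_self, Measure.smul_apply, smul_eq_mul] at hmul
  exact hmul.not_gt ((ENNReal.mul_lt_mul_left hne (measure_ne_top _ _) hc).trans_eq (one_mul _))

theorem ae_exists_ae_mem {F : Set (ℕ → S)} (hF : MeasurableSet F) (hsub : F ⊆ shift 1 ⁻¹' F)
    (s : S) : ∀ᵐ π ∂ν s, π ∈ F → ∃ k, ∀ᵐ σ ∂ν (π k), σ ∈ F := by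
  let N : Set S := {t | ¬∀ᵐ σ ∂ν t, σ ∈ F}
  let E : Set (ℕ → S) := F ∩ ⋂ k, (fun π => π k) ⁻¹' N
  have hE : MeasurableSet E :=
    hF.inter (.iInter fun k => measurable_pi_apply k .of_discrete)
  have hEsub : E ⊆ shift 1 ⁻¹' E := fun π ⟨hπ, hN⟩ =>
    ⟨hsub hπ, Set.mem_iInter.2 fun k => Set.mem_iInter.1 hN (k + 1)⟩
  have hE_ne (t : S) : ν t E ≠ 1 := fun h => by
    have := (hν t).isProbabilityMeasure
    have hmem : ∀ᵐ σ ∂ν t, σ ∈ E := (prob_compl_eq_zero_iff hE).2 h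
    obtain ⟨σ, hσ, rfl⟩ := (hmem.and (hν t).ae_start).exists
    exact Set.mem_iInter.1 hσ.2 0 (hmem.mono fun _ => And.left)
  filter_upwards [measure_eq_zero_iff_ae_notMem.1
    (measure_eq_zero_of_forall_ne_one hν hE hEsub hE_ne s)] with π hπ hπF
  by_contra hk
  exact hπ ⟨hπF, Set.mem_iInter.2 (not_exists.1 hk)⟩

theorem ae_forall_shift_mem_exists_ae_mem {F : Set (ℕ → S)} (hF : MeasurableSet F)
    (hsub : F ⊆ shift 1 ⁻¹' F) (s : S) :
    ∀ᵐ π ∂ν s, ∀ i, shift i π ∈ F → ∃ l, ∀ᵐ σ ∂ν (π (l + i)), σ ∈ F := by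
  have hE : MeasurableSet {π : ℕ → S | π ∈ F → ∃ k, ∀ᵐ σ ∂ν (π k), σ ∈ F} :=
    (hF.mem.imp (.exists fun k => measurable_ae_mem ν F k)).setOf
  exact ae_all_iff.2 fun i =>
    (ae_shift_iff hν hE i s).2 (.of_forall fun π => ae_exists_ae_mem hν hF hsub (π i))

theorem ae_forall_ae_mem_shift_mem {F : Set (ℕ → S)} (hF : MeasurableSet F) (s : S) :
    ∀ᵐ π ∂ν s, ∀ i, (∀ᵐ σ ∂ν (π i), σ ∈ F) → shift i π ∈ F := by
  have hE : MeasurableSet {π : ℕ → S | (∀ᵐ σ ∂ν (π 0), σ ∈ F) → π ∈ F} :=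
    ((measurable_ae_mem ν F 0).imp hF.mem).setOf
  have hstart (t : S) : ∀ᵐ π ∂ν t, (∀ᵐ σ ∂ν (π 0), σ ∈ F) → π ∈ F := by
    by_cases ht : ∀ᵐ σ ∂ν t, σ ∈ F
    · exact ht.mono fun π hπ _ => hπ
    · exact (hν t).ae_start.mono fun π hπ h => (ht (hπ ▸ h)).elim
  refine ae_all_iff.2 fun i => ?_
  filter_upwards [(ae_shift_iff hν hE i s).2 (.of_forall fun π => hstart (π i))] with π hπ
  simpa only [Set.mem_ofPred_eq, shift, zero_add] using hπ

end DiscreteChain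

namespace PathFormula

variable {S : Type*}

theorem eventually_forall_release {α : Type*} {l : Filter α} (Sg : Finset (PathFormula S))
    {p : PathFormula S → PathFormula S → α → Prop}
    (h : ∀ a b, release a b ∈ Sg → ∀ᶠ x in l, p a b x) :
    ∀ᶠ x in l, ∀ a b, release a b ∈ Sg → p a b x := by
  have hall : ∀ᶠ x in l, ∀ c ∈ Sg, ∀ a b, c = release a b → p a b x := by
    refine (Finset.eventually_all Sg).2 fun c hc => ?_
    cases c with
    | release a b =>
      refine (h a b hc).mono fun x hx _ _ hab => ?_
      obtain ⟨rfl, rfl⟩ := release.inj hab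
      exact hx
    | _ => exact .of_forall fun _ _ _ hab => by cases hab
  exact hall.mono fun x hx a b hab => hx _ hab a b rfl

variable [MeasurableSpace S]

/-- The states from which almost every path satisfies `b` at all times, under the bound `n`. -/
def AlmostSurelyAlways (ν : S → Measure (ℕ → S)) (n : ℕ) (b : PathFormula S) (t : S) : Prop :=
  ∀ᵐ σ ∂ν t, ∀ j, b.Sat σ n j

-- `f` only jumps between equal states, so the replayed word has the transitions of `u`.
theorem IsReplay.measure_cylinder_ne_zero {P : S → S → ℝ≥0∞} {A : PathFormula S → S → Prop}
    {u : ℕ → S} {f : ℕ → ℕ} {n₁ n₂ H K : ℕ} {Sg : Finset (PathFormula S)}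
    (h : IsReplay A u n₁ n₂ H Sg f K)
    {μ : Measure (ℕ → S)} (hμ : IsPathMeasure P (u 0) μ) (hu : ∀ k, P (u k) (u (k + 1)) ≠ 0) :
    μ (PiNat.cylinder (fun k => u (f k)) (K + 1)) ≠ 0 := by
  rw [hμ.measure_cylinder _ _ (h.state_eq 0)]
  refine Finset.prod_ne_zero_iff.2 fun k _ => ?_
  rw [h.state_eq (k + 1)]
  exact hu (f k)

variable [DiscreteMeasurableSpace S]

theorem measurable_sat (χ : PathFormula S) (n i : ℕ) :
    Measurable fun ρ : ℕ → S => χ.Sat ρ n i := by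
  induction χ generalizing i with
  | lit p => exact (Measurable.of_discrete (f := (· ∈ p))).comp (measurable_pi_apply i)
  | and _ _ iha ihb => exact (iha i).and (ihb i)
  | or _ _ iha ihb => exact (iha i).or (ihb i)
  | next _ ih => exact ih (i + 1)
  | untl _ _ iha ihb => exact .exists fun _ => (ihb _).and (.forall fun _ => .forall fun _ => iha _)
  | release _ _ iha ihb =>
    exact .forall fun _ => (ihb _).or (.exists fun _ => measurable_const.and (iha _))
  | ev _ ih => exact .exists fun _ => measurable_const.and (ih _)
  | alw _ ih => exact .forall fun _ => .forall fun _ => ih _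

theorem measurableSet_sat (χ : PathFormula S) (n i : ℕ) :
    MeasurableSet {ρ : ℕ → S | χ.Sat ρ n i} :=
  (measurable_sat χ n i).setOf

theorem measurableSet_forall_sat (χ : PathFormula S) (n : ℕ) :
    MeasurableSet {ρ : ℕ → S | ∀ j, χ.Sat ρ n j} :=
  (Measurable.forall fun j => measurable_sat χ n j).setOf

variable {P : S → S → ℝ≥0∞} {ν : S → Measure (ℕ → S)} (hν : ∀ s, IsPathMeasure P s (ν s))
  {χ b : PathFormula S} {n₁ n₂ : ℕ}
include hν

section Finite

variable [Finite S]

theorem ae_exists_almostSurelyAlways (b : PathFormula S) (n : ℕ) (s : S) :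
    ∀ᵐ ρ ∂ν s, ∀ i, (∀ l, b.Sat ρ n (l + i)) → ∃ l, AlmostSurelyAlways ν n b (ρ (l + i)) := by
  filter_upwards [ae_forall_shift_mem_exists_ae_mem hν (measurableSet_forall_sat b n)
    (fun ρ hρ j => (sat_shift ρ n 1 b j).2 (hρ (j + 1))) s] with ρ hρ i hi
  exact hρ i fun j => (sat_shift ρ n i b j).2 (hi j)

theorem ae_sat_of_almostSurelyAlways (b : PathFormula S) (n : ℕ) (s : S) :
    ∀ᵐ ρ ∂ν s, ∀ i, AlmostSurelyAlways ν n b (ρ i) → ∀ l, b.Sat ρ n (l + i) := by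
  filter_upwards [ae_forall_ae_mem_shift_mem hν (measurableSet_forall_sat b n) s] with ρ hρ i hi l
  exact (sat_shift ρ n i b l).1 (hρ i hi l)

theorem AlmostSurelyAlways.of_forall_ae_sat
    (h : ∀ t, (∀ᵐ σ ∂ν t, b.Sat σ n₁ 0) → ∀ᵐ σ ∂ν t, b.Sat σ n₂ 0) {t : S}
    (ht : AlmostSurelyAlways ν n₁ b t) : AlmostSurelyAlways ν n₂ b t := by
  have hshift (n j : ℕ) :
      (∀ᵐ σ ∂ν t, b.Sat σ n j) ↔ ∀ᵐ ρ ∂ν t, ∀ᵐ σ ∂ν (ρ j), b.Sat σ n 0 := by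
    simpa only [Set.mem_ofPred_eq, sat_shift, zero_add] using
      ae_shift_iff hν (measurableSet_sat b n 0) j t
  exact ae_all_iff.2 fun j =>
    (hshift n₂ j).2 (((hshift n₁ j).1 (ae_all_iff.1 ht j)).mono fun ρ => h (ρ j))

theorem frequently_sat_of_exists_isReplay
    (hrelease : ∀ a b, release a b ∈ χ.subs →
      ∀ t, (∀ᵐ σ ∂ν t, b.Sat σ n₁ 0) → ∀ᵐ σ ∂ν t, b.Sat σ n₂ 0)
    (hreplay : ∀ u H, ∃ f K, IsReplay (AlmostSurelyAlways ν n₁) u n₁ n₂ H χ.subs f K)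
    {s : S} (h : ∃ᵐ ρ ∂ν s, χ.Sat ρ n₁ 0) : ∃ᵐ ρ ∂ν s, χ.Sat ρ n₂ 0 := by
  have htypical := (eventually_forall_release χ.subs fun _ b _ =>
    ae_exists_almostSurelyAlways hν b n₁ s).and
      ((hν s).ae_start.and (ae_forall_transition_ne_zero hν s))
  obtain ⟨u, hu, hrel, rfl, hstep⟩ := (h.and_eventually htypical).exists
  obtain ⟨H, hcert⟩ := (hu.eventually_cert subset_rfl hrel).exists
  obtain ⟨f, K, hf⟩ := hreplay u H
  have hcylinder := frequently_ae_mem_iff.2 (hf.measure_cylinder_ne_zero (hν (u 0)) hstep)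
  have hrel' : ∀ᵐ ρ ∂ν (u 0), ∀ a b, release a b ∈ χ.subs →
      ∀ k, AlmostSurelyAlways ν n₁ b (ρ k) → ∀ l, b.Sat ρ n₂ (l + k) :=
    eventually_forall_release χ.subs fun a b hab =>
      (ae_sat_of_almostSurelyAlways hν b n₂ (u 0)).mono fun ρ hρ k hk =>
        hρ k (hk.of_forall_ae_sat hν (hrelease a b hab))
  refine (hcylinder.and_eventually hrel').mono fun ρ ⟨hmem, hρ⟩ => ?_
  exact hf.sat (fun k hk => PiNat.mem_cylinder_iff.1 hmem k (hk.trans K.lt_succ_self)) hρ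
    subset_rfl (.inr rfl) hcert

end Finite

variable [Fintype S]

theorem ae_sat_of_alw_notMem (hχ : ∀ ψ, alw ψ ∉ χ.subs)
    (huntl : ∀ a b, untl a b ∈ χ.subs →
      ∀ t, (∃ᵐ σ ∂ν t, b.Sat σ n₁ 0) → ∃ᵐ σ ∂ν t, b.Sat σ n₂ 0)
    (hn : 2 * ((χ.subs.card + 1) * (Fintype.card S * 2 ^ χ.subs.card)) ≤ n₂)
    {s : S} (h : ∀ᵐ ρ ∂ν s, χ.Sat ρ n₁ 0) : ∀ᵐ ρ ∂ν s, χ.Sat ρ n₂ 0 := by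
  have hdual (ψ : PathFormula S) (hψ : ψ ∈ χ.neg.subs) : ψ.neg ∈ χ.subs := by
    simpa only [neg_neg] using neg_mem_subs_neg hψ
  contrapose! h
  simp only [← sat_neg] at h ⊢
  refine frequently_sat_of_exists_isReplay hν (fun a b hab t => ?_) (fun u H => ?_) h
  · rw [← not_imp_not]
    simpa only [Filter.not_eventually, ← sat_neg] using huntl _ _ (hdual _ hab) t
  · have hcard := card_subs_neg_le χ
    exact exists_isReplay_of_ev_notMem (fun ψ hψ => hχ _ (hdual _ hψ))
      (le_trans (by gcongr; norm_num) hn) n₁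

theorem frequently_sat_and_ae_sat_of_alw_notMem (χ : PathFormula S) (hχ : ∀ ψ, alw ψ ∉ χ.subs)
    (hn : 2 * ((χ.subs.card + 1) * (Fintype.card S * 2 ^ χ.subs.card)) ≤ n₂) (s : S) :
    ((∃ᵐ ρ ∂ν s, χ.Sat ρ n₁ 0) → ∃ᵐ ρ ∂ν s, χ.Sat ρ n₂ 0) ∧
      ((∀ᵐ ρ ∂ν s, χ.Sat ρ n₁ 0) → ∀ᵐ ρ ∂ν s, χ.Sat ρ n₂ 0) := by
  classical
  induction hk : sizeOf χ using Nat.strong_induction_on generalizing χ s with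
  | h k ih =>
    have ih' (ψ b : PathFormula S) (hψ : ψ ∈ χ.subs) (hsub : b.subs ⊆ ψ.subs)
        (hlt : sizeOf b < sizeOf ψ) (t : S) :=
      have hbχ : b.subs ⊆ χ.subs := hsub.trans (subs_subset_of_mem hψ)
      have hcard := Finset.card_le_card hbχ
      ih _ (hk ▸ hlt.trans_le (sizeOf_le_of_mem_subs hψ)) b (fun c hc => hχ c (hbχ hc))
        (le_trans (by gcongr; norm_num) hn) t rfl
    have hn' : Fintype.card S * 2 ^ χ.subs.card ≤ n₂ :=
      le_trans (by rw [← mul_assoc]; exact Nat.le_mul_of_pos_left _ (by positivity)) hn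
    refine ⟨frequently_sat_of_exists_isReplay hν (fun a b hab t => ?_) fun u H => ?_,
      ae_sat_of_alw_notMem hν hχ (fun a b hab t => ?_) hn⟩
    · exact (ih' _ b hab (by grind [subs]) (by grind) t).2
    · exact exists_isReplay_of_alw_notMem hχ hn'
    · exact (ih' _ b hab (by grind [subs]) (by grind) t).1

end PathFormula

theorem PD.eventually_sat_const {AP Var : Type} (v : Var → ℕ) (φ : PD AP Var) :
    ∀ᶠ N in Filter.atTop, ∀ w i, PD.Sat w i v φ → PD.Sat w i (fun _ => N) φ := by
  induction φ with
  | atom | natom => exact .of_forall fun _ _ _ h => h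
  | and a b iha ihb =>
    filter_upwards [iha, ihb] with N ha hb w i h using ⟨ha w i h.1, hb w i h.2⟩
  | or a b iha ihb =>
    filter_upwards [iha, ihb] with N ha hb w i h using h.imp (ha w i) (hb w i)
  | next a ih => exact ih.mono fun N h w i => h w (i + 1)
  | untl a b iha ihb =>
    filter_upwards [iha, ihb] with N ha hb w i ⟨j, hij, hj, hk⟩ using
      ⟨j, hij, hb w j hj, fun k hik hkj => ha w k (hk k hik hkj)⟩
  | release a b iha ihb =>
    filter_upwards [iha, ihb] with N ha hb w i h j hij using
      (h j hij).imp (hb w j) fun ⟨k, hik, hkj, hk⟩ => ⟨k, hik, hkj, ha w k hk⟩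
  | always a ih => exact ih.mono fun N ha w i h j hij => ha w j (h j hij)
  | evVar x a ih =>
    filter_upwards [ih, Filter.eventually_ge_atTop (v x)] with N ha hN w i ⟨j, hij, hj, h⟩ using
      ⟨j, hij, hj.trans (Nat.add_le_add_right hN i), ha w j h⟩

namespace PathFormula

variable {AP Var : Type} {S : Type*} (L : S → Set AP)

/-- The path formula of a pLTL_◇ formula over the labels `L`, in which the parameters are
forgotten. Since only literals do not count as subformulas, `□` becomes a release of an
unsatisfiable literal rather than of a constant. -/
def ofPD : PD AP Var → PathFormula S
  | .atom p => lit {s | p ∈ L s}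
  | .natom p => lit {s | p ∉ L s}
  | .and φ ψ => and (ofPD φ) (ofPD ψ)
  | .or φ ψ => or (ofPD φ) (ofPD ψ)
  | .next φ => next (ofPD φ)
  | .untl φ ψ => untl (ofPD φ) (ofPD ψ)
  | .release φ ψ => release (ofPD φ) (ofPD ψ)
  | .always φ => release (lit ∅) (ofPD φ)
  | .evVar _ φ => ev (ofPD φ)

theorem alw_notMem_subs_ofPD (φ : PD AP Var) (χ : PathFormula S) : alw χ ∉ (ofPD L φ).subs := by
  classical
  induction φ <;> grind [subs, ofPD]

theorem card_subs_ofPD_lt_size (φ : PD AP Var) : (ofPD L φ).subs.card < φ.size := by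
  classical
  induction φ <;> grind [subs, ofPD, PD.size, Finset.card_insert_le, Finset.card_union_le]

theorem two_mul_card_subs_ofPD_le (φ : PD AP Var) (m : ℕ) :
    2 * (((ofPD L φ).subs.card + 1) * (m * 2 ^ (ofPD L φ).subs.card)) ≤
      m * φ.size * 2 ^ φ.size := by
  have hcard := card_subs_ofPD_lt_size L φ
  calc
    _ = m * ((ofPD L φ).subs.card + 1) * 2 ^ ((ofPD L φ).subs.card + 1) := by ring
    _ ≤ m * φ.size * 2 ^ φ.size := by gcongr <;> lia

theorem sat_ofPD (π : ℕ → S) (N : ℕ) (φ : PD AP Var) (i : ℕ) :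
    (ofPD L φ).Sat π N i ↔ PD.Sat (fun k => L (π k)) i (fun _ => N) φ := by
  have exists_ge (i : ℕ) (p : ℕ → Prop) : (∃ j, i ≤ j ∧ p j) ↔ ∃ j, p (j + i) :=
    ⟨fun ⟨j, hij, hj⟩ => ⟨j - i, (Nat.sub_add_cancel hij).symm ▸ hj⟩,
      fun ⟨j, hj⟩ => ⟨j + i, Nat.le_add_left i j, hj⟩⟩
  have forall_ge (i : ℕ) (p : ℕ → Prop) : (∀ j, i ≤ j → p j) ↔ ∀ j, p (j + i) :=
    ⟨fun h j => h _ (Nat.le_add_left i j), fun h j hij => Nat.sub_add_cancel hij ▸ h (j - i)⟩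
  induction φ generalizing i with
  | atom | natom => rfl
  | _ => simp_all only [ofPD, Sat, PD.Sat, Until, add_lt_add_iff_right, add_le_add_iff_right,
      Set.mem_empty_iff_false, and_false, exists_false, or_false]

end PathFormula

theorem PD_Vone_nonempty_iff_bound_general {AP Var : Type} {S : Type*} [Fintype S]
    {m : MeasurableSpace (ℕ → S)} {P : S → S → ℝ≥0∞} (hP : ∀ s, ∑ t, P s t = 1) {s₀ : S}
    (L : S → Set AP) {μ : Measure (ℕ → S)} (hμ : IsPathMeasure P s₀ μ) (φ : PD AP Var) :
    {v : Var → ℕ | μ {π | PD.Sat (fun i => L (π i)) 0 v φ} = 1}.Nonempty ↔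
      μ {π | PD.Sat (fun i => L (π i)) 0 (fun _ : Var => Fintype.card S * φ.size * 2 ^ φ.size) φ}
        = 1 := by
  refine ⟨fun ⟨v, hv⟩ => ?_, fun h => ⟨_, h⟩⟩
  let _ : MeasurableSpace S := ⊤
  have : DiscreteMeasurableSpace S := ⟨fun _ => trivial⟩
  choose ν hν using exists_isPathMeasure hP
  have hsat (N : ℕ) : μ {π | PD.Sat (fun i => L (π i)) 0 (fun _ => N) φ} = 1 ↔
      ∀ᵐ π ∂ν s₀, (PathFormula.ofPD L φ).Sat π N 0 := by
    simp only [← PathFormula.sat_ofPD]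
    exact (hν s₀).measure_eq_one_iff (PathFormula.measurableSet_sat _ N 0) hμ
  obtain ⟨N, hN⟩ := (PD.eventually_sat_const v φ).exists
  have := hμ.isProbabilityMeasure
  have hone := le_antisymm prob_le_one (hv.ge.trans (measure_mono fun π => hN _ 0))
  have htransfer := (PathFormula.frequently_sat_and_ae_sat_of_alw_notMem hν (n₁ := N) _
    (PathFormula.alw_notMem_subs_ofPD L φ) (PathFormula.two_mul_card_subs_ofPD_le L φ _) s₀).2
  exact (hsat _).2 (htransfer ((hsat N).1 hone))

/-- For a pLTL_◇ formula `φ` in which each parameter variable occurs at most once and a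
finite Markov chain `M` with `m` states: `V_{=1}(φ) ≠ ∅` iff `v̄ ∈ V_{=1}(φ)`, where
`v̄(x) = m·|φ|·2^{|φ|}` for every variable `x`. -/
theorem PD_Vone_nonempty_iff_bound
    {AP Var S : Type} [DecidableEq Var] [Fintype S] [DecidableEq S] [MeasurableSpace S]
    (P : S → S → ℝ≥0∞) (hP : ∀ s, ∑ t, P s t = 1)
    (s₀ : S) (L : S → Set AP)
    (μ : Measure (ℕ → S)) (hprob : IsProbabilityMeasure μ)
    (hcyl : ∀ (n : ℕ) (u : ℕ → S),
      μ {π | ∀ k ≤ n, π k = u k} =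
        (if u 0 = s₀ then 1 else 0) * ∏ k ∈ Finset.range n, P (u k) (u (k + 1)))
    (φ : PD AP Var) (hvar : ∀ x : Var, PD.varCount x φ ≤ 1)
    (V : Set (Var → ℕ))
    (hV : V = {v | μ {π | PD.Sat (fun i => L (π i)) 0 v φ} = 1}) :
    V.Nonempty ↔ (fun _ : Var => Fintype.card S * φ.size * 2 ^ φ.size) ∈ V := by
  have hμ : IsPathMeasure P s₀ μ := .of_forall_measure_cylinder fun u n => by
    simpa only [PiNat.cylinder, Nat.lt_succ_iff] using hcyl n u
  rw [hV]
  exact PD_Vone_nonempty_iff_bound_general hP L hμ φ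
end
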